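/- Let M > M₁(Ω₁) and let u^ε be the strictly k-convex solution of problem (2.1), assumed C² up to ∂B_ε(0). Then there is a constant C > 0, depending on n, k, Ω₁ and M but independent of ε, such that for every p ∈ ∂B_ε(0), with ν = p/ε the unit normal pointing into Ω^ε and τ any unit vector tangent to ∂B_ε(0) at p, one has |D²u^ε(p)(τ, ν)| ≤ (C/ε)·(Du^ε(p)·ν). -/

import Mathlib

open Set Metric Filter Topology Bornology
open scoped RealInnerProductSpace

noncomputable section

/-- Euclidean `n`-space. -/
abbrev Euc (n : ℕ) := EuclideanSpace ℝ (Fin n)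

/-- The `k`-th elementary symmetric polynomial of a vector `lam ∈ ℝⁿ`. -/
def esymmVec {n : ℕ} (k : ℕ) (lam : Fin n → ℝ) : ℝ :=
  ∑ S ∈ Finset.powersetCard k (Finset.univ : Finset (Fin n)), ∏ i ∈ S, lam i

/-- `σ_k(A)`: the `k`-th elementary symmetric polynomial of the eigenvalues of a
symmetric matrix `A` (junk value `0` if `A` is not symmetric). -/
noncomputable def sigmaMat {n : ℕ} (k : ℕ) (A : Matrix (Fin n) (Fin n) ℝ) : ℝ := by
  classical exact if h : A.IsHermitian then esymmVec k h.eigenvalues else 0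

/-- The eigenvalues of the symmetric matrix `A` lie in the Gårding cone
`Γ_k = {λ : σ_j(λ) > 0, j = 1, …, k}`. -/
def InGardingCone {n : ℕ} (k : ℕ) (A : Matrix (Fin n) (Fin n) ℝ) : Prop :=
  ∃ h : A.IsHermitian, ∀ j : ℕ, 1 ≤ j → j ≤ k → 0 < esymmVec j h.eigenvalues

/-- The Hessian matrix of `u` at `x`, with derivatives taken within the set `s`. -/
noncomputable def hessianWithin {n : ℕ} (u : Euc n → ℝ) (s : Set (Euc n)) (x : Euc n) :
    Matrix (Fin n) (Fin n) ℝ :=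
  fun i j => iteratedFDerivWithin ℝ 2 u s x
    ![EuclideanSpace.single i (1:ℝ), EuclideanSpace.single j (1:ℝ)]

/-- The Hessian matrix `D²u(x)` of `u` at `x`. -/
noncomputable def hessian {n : ℕ} (u : Euc n → ℝ) (x : Euc n) : Matrix (Fin n) (Fin n) ℝ :=
  fun i j => iteratedFDeriv ℝ 2 u x
    ![EuclideanSpace.single i (1:ℝ), EuclideanSpace.single j (1:ℝ)]

/-- Operator norm of the Hessian matrix of `u` at `x` (derivatives within `s`). -/
noncomputable def hessOpNormWithin {n : ℕ} (u : Euc n → ℝ) (s : Set (Euc n)) (x : Euc n) : ℝ :=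
  ‖Matrix.toEuclideanCLM (𝕜 := ℝ) (hessianWithin u s x)‖

/-- A set has smooth boundary: it is the sublevel set of a smooth defining function
with nonvanishing differential on the boundary. -/
def HasSmoothBoundary {n : ℕ} (Ω : Set (Euc n)) : Prop :=
  ∃ ρ : Euc n → ℝ, ContDiff ℝ (⊤ : ℕ∞) ρ ∧ Ω = {x | ρ x < 0} ∧
    ∀ x ∈ frontier Ω, fderiv ℝ ρ x ≠ 0

/-- `c_{n,k} = (C(n,k))^{1/k}` where `C(n,k)` is the binomial coefficient. -/
noncomputable def cnk (n k : ℕ) : ℝ := (n.choose k : ℝ) ^ ((1:ℝ)/(k:ℝ))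

/-- The radially symmetric subsolution `|x - x₀|²/(2c_{n,k}) − ε²/(2c_{n,k}) − M`. -/
noncomputable def underSol {n : ℕ} (k : ℕ) (x₀ : Euc n) (ε M : ℝ) (x : Euc n) : ℝ :=
  ‖x - x₀‖^2 / (2 * cnk n k) - ε^2 / (2 * cnk n k) - M

/-- The closed ring `Ω̄^ε = closure (Ω₁ \ B̄_ε(x₀))`. -/
def ringSet {n : ℕ} (Ω₁ : Set (Euc n)) (x₀ : Euc n) (ε : ℝ) : Set (Euc n) :=
  closure (Ω₁ \ closedBall x₀ ε)

/-- `u` is a strictly `k`-convex solution of problem (2.1):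
`σ_k(D²u) = 1` in `Ω^ε = Ω₁ \ B̄_ε(x₀)`, `u = 0` on `∂Ω₁`, `u = −M` on `∂B_ε(x₀)`,
with `u ∈ C²(Ω̄^ε)`. -/
def IsSol {n : ℕ} (k : ℕ) (Ω₁ : Set (Euc n)) (x₀ : Euc n) (ε M : ℝ) (u : Euc n → ℝ) : Prop :=
  ContDiffOn ℝ 2 u (ringSet Ω₁ x₀ ε) ∧
  (∀ x ∈ Ω₁ \ closedBall x₀ ε,
      InGardingCone k (hessianWithin u (ringSet Ω₁ x₀ ε) x) ∧
      sigmaMat k (hessianWithin u (ringSet Ω₁ x₀ ε) x) = 1) ∧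
  (∀ x ∈ frontier Ω₁, u x = 0) ∧
  (∀ x ∈ sphere x₀ ε, u x = -M)

/-- `ψ` is a strictly `k`-convex solution of problem (2.2):
`σ_k(D²ψ) = 1` in `Ω₁`, `ψ = 0` on `∂Ω₁`, with `ψ ∈ C^∞(Ω̄₁)`. -/
def IsSol22 {n : ℕ} (k : ℕ) (Ω₁ : Set (Euc n)) (ψ : Euc n → ℝ) : Prop :=
  ContDiffOn ℝ (⊤ : ℕ∞) ψ (closure Ω₁) ∧
  (∀ x ∈ Ω₁, InGardingCone k (hessianWithin ψ (closure Ω₁) x) ∧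
      sigmaMat k (hessianWithin ψ (closure Ω₁) x) = 1) ∧
  (∀ x ∈ frontier Ω₁, ψ x = 0)

/-- `u` is a strictly `k`-convex solution of the Dirichlet problem on the convex ring
`Ω = Ω₁ \ Ω̄₂`: `σ_k(D²u) = 1` in `Ω`, `u = 0` on `∂Ω₁`, `u = −M` on `∂Ω₂`,
with `u ∈ C²(Ω̄)`. -/
def IsSolRing {n : ℕ} (k : ℕ) (Ω₁ Ω₂ : Set (Euc n)) (M : ℝ) (u : Euc n → ℝ) : Prop :=
  ContDiffOn ℝ 2 u (closure (Ω₁ \ closure Ω₂)) ∧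
  (∀ x ∈ Ω₁ \ closure Ω₂,
      InGardingCone k (hessianWithin u (closure (Ω₁ \ closure Ω₂)) x) ∧
      sigmaMat k (hessianWithin u (closure (Ω₁ \ closure Ω₂)) x) = 1) ∧
  (∀ x ∈ frontier Ω₁, u x = 0) ∧
  (∀ x ∈ frontier Ω₂, u x = -M)

/-- The extension `ũ` of `u`, equal to `−M` on the closed ball `B̄_ε(x₀)`. -/
noncomputable def extendBy {n : ℕ} (u : Euc n → ℝ) (x₀ : Euc n) (ε M : ℝ) (x : Euc n) : ℝ := by
  classical exact if x ∈ closedBall x₀ ε then -M else u x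

/-- The extension `ũ` of `u`, equal to `−M` on the set `Ω₂`. -/
noncomputable def extendOn {n : ℕ} (u : Euc n → ℝ) (Ω₂ : Set (Euc n)) (M : ℝ) (x : Euc n) : ℝ := by
  classical exact if x ∈ Ω₂ then -M else u x

/-- The quadratic polynomial with Hessian `A`, linear part `b` and constant term `c`. -/
noncomputable def quadPoly {n : ℕ} (A : Matrix (Fin n) (Fin n) ℝ) (b : Euc n) (c : ℝ)
    (x : Euc n) : ℝ :=
  (∑ i, ∑ j, A i j * x i * x j) / 2 + ⟪b, x⟫ + c

/-!
Let `R` be a rotation of angle `θ`, and let `s = B θ`. Since `σ_k^{1/k}` is concave on `Γ_k`, the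
function `u ∘ R + s • underSol` is a subsolution on `Ω^ε ∩ R⁻¹ Ω^ε` for the right-hand side
`(1 + s)^k`, which `(1 + s) u` solves. The two agree on the sphere, and on the outer boundary the
gap `M - M₁` pays for the rotation, because `u` is bounded below by a multiple of the distance to
the boundary, uniformly in `ε`. Comparison therefore gives `u_ν(R p) ≤ (1 + B θ) u_ν(p)`, and one
divides by `θ → 0`: as `u` is constant on the sphere, the derivative of `u_ν` along the rotation is
`ε D²u(τ, ν)`.
-/

section RealRootedPolynomials

open Polynomial

theorem splits_derivative {f : ℝ[X]} (hf : f.Splits) : (derivative f).Splits := by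
  rw [splits_iff_card_roots] at hf ⊢
  have card_roots_le := card_roots_le_derivative f
  have roots_le := card_roots' (derivative f)
  have degree_le := natDegree_derivative_le f
  rcases Nat.eq_zero_or_pos f.natDegree with h0 | h0 <;> omega

theorem splits_hasseDeriv {f : ℝ[X]} (hf : f.Splits) (j : ℕ) : (hasseDeriv j f).Splits := by
  have h_iter : (derivative^[j] f).Splits :=
    Function.Iterate.rec (fun g : ℝ[X] => g.Splits) hf (fun _ hg => splits_derivative hg) j
  have h_fact : (j.factorial : ℝ) ≠ 0 := Nat.cast_ne_zero.2 j.factorial_ne_zero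
  have h_eq : hasseDeriv j f = C (j.factorial : ℝ)⁻¹ * derivative^[j] f := by
    rw [← factorial_smul_hasseDeriv, LinearMap.smul_apply, nsmul_eq_mul, ← C_eq_natCast,
      ← mul_assoc, ← C_mul, inv_mul_cancel₀ h_fact, C_1, one_mul]
  exact h_eq ▸ (Splits.C _).mul h_iter

/-- Laguerre's inequality `f f'' ≤ f' ^ 2` at the origin. -/
theorem two_mul_coeff_zero_mul_coeff_two_le {f : ℝ[X]} (hf : f.Splits) :
    2 * (f.coeff 0 * f.coeff 2) ≤ f.coeff 1 ^ 2 := by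
  induction hf using Submonoid.closure_induction with
  | mem f hf =>
    rcases hf with ⟨a, rfl⟩ | ⟨a, rfl⟩ <;> simp [coeff_C, coeff_X]
  | one => simp [coeff_one]
  | mul f g _ _ hf hg =>
    have h_one : (f * g).coeff 1 = f.coeff 0 * g.coeff 1 + f.coeff 1 * g.coeff 0 := by
      simp [coeff_mul, Finset.Nat.antidiagonal_succ]
    have h_two : (f * g).coeff 2 =
        f.coeff 0 * g.coeff 2 + f.coeff 1 * g.coeff 1 + f.coeff 2 * g.coeff 0 := by
      simp [coeff_mul, Finset.Nat.antidiagonal_succ]; ring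
    rw [mul_coeff_zero, h_one, h_two]
    nlinarith [mul_le_mul_of_nonneg_left hf (sq_nonneg (g.coeff 0)),
      mul_le_mul_of_nonneg_left hg (sq_nonneg (f.coeff 0))]

/-- A weak form, without the binomial factors, of Newton's inequalities. -/
theorem coeff_mul_coeff_add_two_le_sq {f : ℝ[X]} (hf : f.Splits) (j : ℕ) :
    f.coeff j * f.coeff (j + 2) ≤ f.coeff (j + 1) ^ 2 := by
  have laguerre := two_mul_coeff_zero_mul_coeff_two_le (splits_hasseDeriv hf j)
  have h_choose_one : ((j + 1).choose j : ℝ) = j + 1 := by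
    rw [Nat.choose_succ_self_right, Nat.cast_succ]
  have h_choose_two : ((j + 2).choose j : ℝ) = (j + 2) * (j + 1) / 2 := by
    rw [Nat.choose_symm_add, Nat.cast_choose_two]; push_cast; ring
  simp only [hasseDeriv_coeff, zero_add, Nat.choose_self, Nat.cast_one, one_mul,
    add_comm 1 j, add_comm 2 j, h_choose_one, h_choose_two] at laguerre
  by_contra! h_lt
  have hj : (0 : ℝ) < j + 1 := j.cast_add_one_pos
  nlinarith [sq_nonneg (f.coeff (j + 1)), mul_pos hj (sub_pos.2 h_lt)]

/-- Removing a linear factor preserves positivity of the coefficients, one degree lower. This is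
the reason why `∂σ_k/∂λ_i > 0` on the Gårding cone. -/
theorem coeff_pos_of_mul_one_add_C_mul_X {f : ℝ[X]} (hf : f.Splits) {a : ℝ} {k : ℕ}
    (h : ∀ j ≤ k, 0 < (f * (1 + C a * X)).coeff j) : ∀ j < k, 0 < f.coeff j := by
  have h_coeff (j : ℕ) : (f * (1 + C a * X)).coeff (j + 1) = f.coeff (j + 1) + a * f.coeff j := by
    rw [mul_add, mul_one, coeff_add, mul_left_comm, coeff_C_mul, coeff_mul_X]
  intro j hj
  induction j with
  | zero => simpa using h 0 k.zero_le
  | succ j ih =>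
    have h_j := ih (by omega)
    have h_one := h (j + 1) (by omega)
    have h_two := h (j + 2) (by omega)
    rw [h_coeff] at h_one h_two
    have newton := coeff_mul_coeff_add_two_le_sq hf j
    by_contra! h_neg
    nlinarith [mul_pos h_two h_j, mul_nonneg (neg_nonneg.2 h_neg) h_one.le]

theorem roots_neg_of_coeff_nonneg {f : ℝ[X]} (h0 : 0 < f.coeff 0) (h : ∀ i, 0 ≤ f.coeff i) {r : ℝ}
    (hr : r ∈ f.roots) : r < 0 := by
  by_contra! hr_nonneg
  have h_le : f.coeff 0 ≤ f.eval r := by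
    rw [eval_eq_sum_range, Finset.sum_range_succ']
    have := Finset.sum_nonneg fun i (_ : i ∈ Finset.range f.natDegree) =>
      mul_nonneg (h (i + 1)) (pow_nonneg hr_nonneg (i + 1))
    simpa using this
  linarith [(mem_roots'.1 hr).2.eq_zero]

/-- Mahler's inequality against a constant vector: multiply the weighted AM–GM inequalities
`(x / b) ^ w ≤ w * (x / b) + (1 - w)`, with `w = b / (b + t)`, over all `x`. -/
theorem add_pow_card_le_prod_map_add {m : Multiset ℝ} (hm : ∀ x ∈ m, 0 < x) {b t : ℝ} (hb : 0 < b)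
    (ht : 0 ≤ t) (h_prod : m.prod = b ^ m.card) :
    (b + t) ^ m.card ≤ (m.map (· + t)).prod := by
  have hbt : 0 < b + t := by linarith
  have factor (x : ℝ) (hx : 0 < x) : (b + t) * (x / b) ^ (b / (b + t)) ≤ x + t := by
    have amgm := Real.geom_mean_le_arith_mean2_weighted (w₁ := b / (b + t)) (w₂ := t / (b + t))
      (p₁ := x / b) (p₂ := 1) (by positivity) (by positivity) (by positivity) zero_le_one
      (by field_simp)
    rw [Real.one_rpow, mul_one] at amgm
    calc (b + t) * (x / b) ^ (b / (b + t))
        ≤ (b + t) * (b / (b + t) * (x / b) + t / (b + t) * 1) := by gcongr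
      _ = x + t := by field_simp
  have h_unit : (m.map fun x => (x / b) ^ (b / (b + t))).prod = 1 := by
    rw [Real.multiset_prod_map_rpow _ _ fun x hx => (div_pos (hm x hx) hb).le,
      Multiset.prod_map_div, Multiset.map_id', h_prod, Multiset.map_const', Multiset.prod_replicate,
      div_self (by positivity), Real.one_rpow]
  calc (b + t) ^ m.card
      = (m.map fun x => (b + t) * (x / b) ^ (b / (b + t))).prod := by
        rw [Multiset.prod_map_mul, h_unit, mul_one, Multiset.map_const', Multiset.prod_replicate]
    _ ≤ (m.map (· + t)).prod :=
        Multiset.prod_map_le_prod_map₀ _ _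
          (fun x hx => mul_nonneg hbt.le (Real.rpow_nonneg (div_pos (hm x hx) hb).le _))
          fun x hx => factor x (hm x hx)

theorem add_mul_pow_le_eval {f : ℝ[X]} (hf : f.Splits) (h : ∀ i, 0 ≤ f.coeff i) {a c t : ℝ}
    (ha : 0 < a) (hc : 0 < c) (ht : 0 ≤ t) (h_const : f.coeff 0 = a ^ f.natDegree)
    (h_lead : f.leadingCoeff = c ^ f.natDegree) : (a + c * t) ^ f.natDegree ≤ f.eval t := by
  set m := f.roots.map (- ·)
  have h_card : m.card = f.natDegree := by
    rw [Multiset.card_map, hf.natDegree_eq_card_roots]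
  have hm : ∀ x ∈ m, 0 < x := by
    intro x hx
    obtain ⟨r, hr, rfl⟩ := Multiset.mem_map.1 hx
    exact neg_pos.2 (roots_neg_of_coeff_nonneg (h_const ▸ by positivity) h hr)
  have h_eval (s : ℝ) : f.eval s = c ^ f.natDegree * (m.map (· + s)).prod := by
    rw [hf.eval_eq_prod_roots, h_lead, Multiset.map_map]
    simp only [Function.comp_def, sub_eq_neg_add]
  have h_prod : m.prod = (a / c) ^ m.card := by
    have := h_eval 0
    rw [← coeff_zero_eq_eval_zero, h_const] at this
    simp only [add_zero, Multiset.map_id'] at this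
    rw [h_card, div_pow, this, mul_div_cancel_left₀ _ (by positivity)]
  calc (a + c * t) ^ f.natDegree = c ^ f.natDegree * (a / c + t) ^ m.card := by
        rw [h_card, ← mul_pow, mul_add, mul_div_cancel₀ _ hc.ne']
    _ ≤ c ^ f.natDegree * (m.map (· + t)).prod := by
        gcongr; exact add_pow_card_le_prod_map_add hm (div_pos ha hc) ht h_prod
    _ = f.eval t := (h_eval t).symm

end RealRootedPolynomials

section HessianOperators

open Polynomial
open scoped Matrix

theorem cnk_pos {n k : ℕ} (hkn : k ≤ n) : 0 < cnk n k :=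
  Real.rpow_pos_of_pos (Nat.cast_pos.2 (Nat.choose_pos hkn)) _

theorem cnk_pow {n k : ℕ} (hk : 1 ≤ k) : cnk n k ^ k = n.choose k := by
  rw [cnk, one_div, Real.rpow_inv_natCast_pow (Nat.cast_nonneg _) (by omega)]

theorem esymmVec_eq_coeff_prod {n : ℕ} (j : ℕ) (lam : Fin n → ℝ) :
    esymmVec j lam = (∏ i, (1 + C (lam i) * X)).coeff j := by
  simp only [Finset.prod_one_add, Finset.prod_mul_distrib, Finset.prod_const, ← map_prod,
    finsetSum_coeff, coeff_C_mul, coeff_X_pow, mul_ite, mul_one, mul_zero]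
  rw [← Finset.sum_filter, esymmVec]
  refine Finset.sum_congr ?_ fun _ _ => rfl
  ext S
  simp [Finset.mem_powersetCard, eq_comm]

theorem esymmVec_zero {n : ℕ} (lam : Fin n → ℝ) : esymmVec 0 lam = 1 := by
  simp [esymmVec]

theorem esymmVec_eq_coeff_prod_X_add_C {n j : ℕ} (hjn : j ≤ n) (lam : Fin n → ℝ) :
    esymmVec j lam = (∏ i, (X + C (lam i))).coeff (n - j) := by
  rw [Finset.prod_X_add_C_coeff _ _ (by simp), Finset.card_univ, Fintype.card_fin,
    Nat.sub_sub_self hjn, esymmVec]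

theorem esymmVec_add_const {n k : ℕ} (hkn : k ≤ n) (lam : Fin n → ℝ) (t : ℝ) :
    esymmVec k (fun i => lam i + t) = (hasseDeriv (n - k) (∏ i, (X + C (lam i)))).eval t := by
  rw [← taylor_coeff, taylor_apply, prod_comp, esymmVec_eq_coeff_prod_X_add_C hkn]
  simp only [add_comp, X_comp, C_comp, C_add, add_assoc, add_comm (C t)]

/-- Concavity of `σ_k ^ (1 / k)` on the Gårding cone, along the direction `(1, …, 1)`. -/
theorem add_cnk_mul_pow_le_esymmVec_add_const {n k : ℕ} (hk : 1 ≤ k) (hkn : k ≤ n)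
    {lam : Fin n → ℝ} (h_pos : ∀ j ≤ k, 0 < esymmVec j lam) {a t : ℝ} (ha : 0 < a) (ht : 0 ≤ t)
    (h_val : esymmVec k lam = a ^ k) :
    (a + cnk n k * t) ^ k ≤ esymmVec k fun i => lam i + t := by
  set p : ℝ[X] := ∏ i, (X + C (lam i))
  have hp_deg : p.natDegree = n := by
    simp [p, natDegree_prod_of_monic _ _ fun i _ => monic_X_add_C (lam i)]
  have h_deg : (hasseDeriv (n - k) p).natDegree = k := by
    rw [natDegree_hasseDeriv, hp_deg, Nat.sub_sub_self hkn]
  have h_coeff {i : ℕ} (hi : i ≤ k) : (hasseDeriv (n - k) p).coeff i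
      = ((i + (n - k)).choose (n - k) : ℝ) * esymmVec (k - i) lam := by
    rw [hasseDeriv_coeff, esymmVec_eq_coeff_prod_X_add_C (by omega),
      show n - (k - i) = i + (n - k) by omega]
  have h_splits : (hasseDeriv (n - k) p).Splits :=
    splits_hasseDeriv (Splits.prod fun i _ => Splits.X_add_C _) _
  have h_nonneg (i : ℕ) : 0 ≤ (hasseDeriv (n - k) p).coeff i := by
    rcases le_or_gt i k with hi | hi
    · rw [h_coeff hi]
      exact mul_nonneg (Nat.cast_nonneg _) (h_pos _ (Nat.sub_le k i)).le
    · exact (coeff_eq_zero_of_natDegree_lt (h_deg.trans_lt hi)).ge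
  have h_const : (hasseDeriv (n - k) p).coeff 0 = a ^ k := by
    rw [h_coeff k.zero_le, zero_add, Nat.choose_self, Nat.cast_one, one_mul, Nat.sub_zero, h_val]
  have h_lead : (hasseDeriv (n - k) p).leadingCoeff = cnk n k ^ k := by
    rw [leadingCoeff, h_deg, h_coeff le_rfl, Nat.sub_self, esymmVec_zero, mul_one,
      Nat.add_sub_cancel' hkn, Nat.choose_symm hkn, cnk_pow hk]
  have h := add_mul_pow_le_eval h_splits h_nonneg ha (cnk_pos hkn) ht
  rw [h_deg] at h
  exact (h h_const h_lead).trans_eq (esymmVec_add_const hkn lam t).symm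

theorem charpolyRev_diagonal {ι R : Type*} [Fintype ι] [DecidableEq ι] [CommRing R] (d : ι → R) :
    (Matrix.diagonal d).charpolyRev = ∏ i, (1 - C (d i) * X) := by
  rw [Matrix.charpolyRev, Matrix.diagonal_map C_0, ← Matrix.diagonal_smul, ← Matrix.diagonal_one,
    Matrix.diagonal_sub, Matrix.det_diagonal]
  simp only [Pi.smul_apply, smul_eq_mul, mul_comm X]

theorem charpolyRev_mul_comm {ι R : Type*} [Fintype ι] [DecidableEq ι] [CommRing R]
    (A B : Matrix ι ι R) : (A * B).charpolyRev = (B * A).charpolyRev := by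
  rw [← Matrix.reverse_charpoly, Matrix.charpoly_mul_comm, Matrix.reverse_charpoly]

theorem charpolyRev_conj {ι R : Type*} [Fintype ι] [DecidableEq ι] [CommRing R]
    {U V : Matrix ι ι R} (hVU : V * U = 1) (A : Matrix ι ι R) :
    (U * A * V).charpolyRev = A.charpolyRev := by
  rw [charpolyRev_mul_comm, ← mul_assoc, hVU, one_mul]

theorem charpolyRev_smul {ι R : Type*} [Fintype ι] [DecidableEq ι] [CommRing R]
    (c : R) (A : Matrix ι ι R) : (c • A).charpolyRev = A.charpolyRev.comp (C c * X) := by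
  rw [Matrix.charpolyRev, Matrix.charpolyRev, ← coe_compRingHom_apply, RingHom.map_det]
  congr 1
  ext1 i j
  rcases eq_or_ne i j with rfl | h <;> simp [*] <;> ring

theorem det_diagonal_add_vecMulVec_of_field {ι K : Type*} [Fintype ι] [DecidableEq ι] [Field K]
    {a : ι → K} (ha : ∀ i, a i ≠ 0) (v w : ι → K) :
    (Matrix.diagonal a + Matrix.vecMulVec v w).det =
      ∏ i, a i + ∑ i, v i * w i * ∏ j ∈ Finset.univ.erase i, a j := by
  have h_inv : (Matrix.diagonal a)⁻¹ = Matrix.diagonal fun i => (a i)⁻¹ :=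
    Matrix.inv_eq_right_inv (by simp [Matrix.diagonal_mul_diagonal, ha])
  have h_unit : IsUnit (Matrix.diagonal a).det := by
    simp [Matrix.det_diagonal, Finset.prod_ne_zero_iff, ha]
  rw [Matrix.vecMulVec_eq Unit, Matrix.det_add_replicateCol_mul_replicateRow h_unit, h_inv,
    Matrix.det_unique (n := Unit), Matrix.det_diagonal, Matrix.add_apply, mul_add,
    Matrix.one_apply_eq, mul_one, Matrix.mul_apply, Finset.mul_sum]
  congr 1
  refine Finset.sum_congr rfl fun i _ => ?_
  rw [Matrix.mul_diagonal, Matrix.replicateRow_apply, Matrix.replicateCol_apply,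
    ← Finset.mul_prod_erase Finset.univ a (Finset.mem_univ i)]
  field_simp [ha i]

theorem det_diagonal_add_vecMulVec {ι R : Type*} [Fintype ι] [DecidableEq ι] [CommRing R]
    [IsDomain R] {a : ι → R} (ha : ∀ i, a i ≠ 0) (v w : ι → R) :
    (Matrix.diagonal a + Matrix.vecMulVec v w).det =
      ∏ i, a i + ∑ i, v i * w i * ∏ j ∈ Finset.univ.erase i, a j := by
  let φ := algebraMap R (FractionRing R)
  have hφ : Function.Injective φ := IsFractionRing.injective R (FractionRing R)
  apply hφ
  have h_map : φ.mapMatrix (Matrix.diagonal a + Matrix.vecMulVec v w)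
      = Matrix.diagonal (φ ∘ a) + Matrix.vecMulVec (φ ∘ v) (φ ∘ w) := by
    ext i j
    rcases eq_or_ne i j with rfl | h <;> simp [*, Matrix.vecMulVec_apply]
  have h_ne (i : ι) : (φ ∘ a) i ≠ 0 := (map_ne_zero_iff φ hφ).2 (ha i)
  rw [RingHom.map_det, h_map, det_diagonal_add_vecMulVec_of_field h_ne]
  simp

theorem charpolyRev_neg_diagonal_add_vecMulVec {ι R : Type*} [Fintype ι] [DecidableEq ι]
    [CommRing R] [IsDomain R] (d v w : ι → R) :
    (-(Matrix.diagonal d + Matrix.vecMulVec v w)).charpolyRev = ∏ i, (1 + C (d i) * X) +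
      ∑ i, X * C (v i * w i) * ∏ j ∈ Finset.univ.erase i, (1 + C (d j) * X) := by
  have h_ne (i : ι) : 1 + C (d i) * X ≠ 0 := fun h => by simpa using congrArg (coeff · 0) h
  have h_eq : 1 - (X : R[X]) • (-(Matrix.diagonal d + Matrix.vecMulVec v w)).map C
      = Matrix.diagonal (fun i => 1 + C (d i) * X)
        + Matrix.vecMulVec (fun i => X * C (v i)) (fun i => C (w i)) := by
    ext1 i j
    rcases eq_or_ne i j with rfl | h <;> simp [*, Matrix.vecMulVec_apply] <;> ring
  simp only [Matrix.charpolyRev, h_eq, det_diagonal_add_vecMulVec h_ne, C_mul, mul_assoc]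

variable {n : ℕ} {A : Matrix (Fin n) (Fin n) ℝ}

theorem exists_eq_conj_diagonal_eigenvalues (hA : A.IsHermitian) :
    ∃ U : Matrix (Fin n) (Fin n) ℝ, U * Uᵀ = 1 ∧ Uᵀ * U = 1 ∧
      A = U * Matrix.diagonal hA.eigenvalues * Uᵀ :=
  ⟨hA.eigenvectorUnitary, Unitary.coe_mul_star_self hA.eigenvectorUnitary,
    Unitary.coe_star_mul_self hA.eigenvectorUnitary, hA.spectral_theorem⟩

theorem charpolyRev_neg_conj_diagonal {U V : Matrix (Fin n) (Fin n) ℝ} (hVU : V * U = 1)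
    (d : Fin n → ℝ) :
    (-(U * Matrix.diagonal d * V)).charpolyRev = ∏ i, (1 + C (d i) * X) := by
  rw [← Matrix.neg_mul, ← Matrix.mul_neg, charpolyRev_conj hVU, Matrix.diagonal_neg,
    charpolyRev_diagonal]
  simp only [C_neg, neg_mul, sub_neg_eq_add]

theorem charpolyRev_neg_eq_prod (hA : A.IsHermitian) :
    (-A).charpolyRev = ∏ i, (1 + C (hA.eigenvalues i) * X) := by
  obtain ⟨U, -, hU, h_eq⟩ := exists_eq_conj_diagonal_eigenvalues hA
  conv_lhs => rw [h_eq, charpolyRev_neg_conj_diagonal hU]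

theorem sigmaMat_eq_esymmVec (hA : A.IsHermitian) (j : ℕ) :
    sigmaMat j A = esymmVec j hA.eigenvalues :=
  dif_pos hA

/-- `det (1 + t A)` is the generating function of the `σ_j(A)`. -/
theorem sigmaMat_eq_coeff_charpolyRev (hA : A.IsHermitian) (j : ℕ) :
    sigmaMat j A = (-A).charpolyRev.coeff j := by
  rw [sigmaMat_eq_esymmVec hA, esymmVec_eq_coeff_prod, charpolyRev_neg_eq_prod hA]

theorem sigmaMat_zero_left (hA : A.IsHermitian) : sigmaMat 0 A = 1 := by
  rw [sigmaMat_eq_esymmVec hA, esymmVec_zero]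

theorem sigmaMat_smul (hA : A.IsHermitian) (j : ℕ) (c : ℝ) :
    sigmaMat j (c • A) = c ^ j * sigmaMat j A := by
  rw [sigmaMat_eq_coeff_charpolyRev hA,
    sigmaMat_eq_coeff_charpolyRev (hA.smul (IsSelfAdjoint.all c)), ← smul_neg, charpolyRev_smul,
    comp_C_mul_X_coeff, mul_comm]

theorem sigmaMat_conj {Q : Matrix (Fin n) (Fin n) ℝ} (hQ : Q * Qᵀ = 1) (hA : A.IsHermitian)
    (j : ℕ) : sigmaMat j (Qᵀ * A * Q) = sigmaMat j A := by
  have hQA : (Qᵀ * A * Q).IsHermitian := Matrix.isHermitian_conjTranspose_mul_mul Q hA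
  rw [sigmaMat_eq_coeff_charpolyRev hA, sigmaMat_eq_coeff_charpolyRev hQA, ← Matrix.neg_mul,
    ← Matrix.mul_neg, charpolyRev_conj hQ]

theorem inGardingCone_iff {k : ℕ} :
    InGardingCone k A ↔ A.IsHermitian ∧ ∀ j ≤ k, 0 < sigmaMat j A := by
  refine ⟨fun ⟨hA, h⟩ => ⟨hA, fun j hj => ?_⟩, fun ⟨hA, h⟩ => ⟨hA, fun j _ hj => ?_⟩⟩
  · rcases Nat.eq_zero_or_pos j with rfl | hj_pos
    · exact (sigmaMat_zero_left hA).symm ▸ one_pos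
    · exact (sigmaMat_eq_esymmVec hA j).symm ▸ h j hj_pos hj
  · exact sigmaMat_eq_esymmVec hA j ▸ h j hj

theorem sigmaMat_le_sigmaMat_add_vecMulVec {k : ℕ} (hA : InGardingCone k A) (v : Fin n → ℝ) {j : ℕ}
    (hj : j ≤ k) : sigmaMat j A ≤ sigmaMat j (A + Matrix.vecMulVec v v) := by
  obtain ⟨hA, h_pos⟩ := inGardingCone_iff.1 hA
  obtain ⟨U, hUUt, hUtU, h_eq⟩ := exists_eq_conj_diagonal_eigenvalues hA
  set d := hA.eigenvalues
  have h_conj : A + Matrix.vecMulVec v v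
      = U * (Matrix.diagonal d + Matrix.vecMulVec (Uᵀ.mulVec v) (Uᵀ.mulVec v)) * Uᵀ := by
    rw [Matrix.mul_add, Matrix.add_mul, ← h_eq, Matrix.mul_vecMulVec, Matrix.vecMulVec_mul,
      Matrix.mulVec_mulVec, hUUt, Matrix.one_mulVec, Matrix.mulVec_transpose,
      Matrix.vecMul_vecMul, hUUt, Matrix.vecMul_one]
  have hA_add : (A + Matrix.vecMulVec v v).IsHermitian :=
    hA.add (Matrix.posSemidef_vecMulVec_self_star v).1
  have h_factor (i : Fin n) :
      (∏ j ∈ Finset.univ.erase i, (1 + C (d j) * X)) * (1 + C (d i) * X) = (-A).charpolyRev := by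
    rw [Finset.prod_erase_mul _ _ (Finset.mem_univ i), charpolyRev_neg_eq_prod hA]
  have h_splits (i : Fin n) : (∏ j ∈ Finset.univ.erase i, (1 + C (d j) * X)).Splits :=
    Splits.prod fun j _ => Splits.of_natDegree_le_one (by compute_degree)
  rw [sigmaMat_eq_coeff_charpolyRev hA, sigmaMat_eq_coeff_charpolyRev hA_add, h_conj,
    ← Matrix.neg_mul, ← Matrix.mul_neg, charpolyRev_conj hUtU,
    charpolyRev_neg_diagonal_add_vecMulVec, charpolyRev_neg_eq_prod hA, coeff_add, finsetSum_coeff]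
  refine le_add_of_nonneg_right (Finset.sum_nonneg fun i _ => ?_)
  rcases j with _ | j
  · simp [mul_assoc]
  · rw [mul_assoc, coeff_X_mul, coeff_C_mul]
    refine mul_nonneg (mul_self_nonneg _)
      (coeff_pos_of_mul_one_add_C_mul_X (h_splits i) (a := d i) (fun l hl => ?_) j hj).le
    rw [h_factor, ← sigmaMat_eq_coeff_charpolyRev hA]
    exact h_pos l hl

theorem InGardingCone.add_and_sigmaMat_le_add {k : ℕ} (hA : InGardingCone k A)
    {P : Matrix (Fin n) (Fin n) ℝ} (hP : P.PosSemidef) :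
    InGardingCone k (A + P) ∧ ∀ j ≤ k, sigmaMat j A ≤ sigmaMat j (A + P) := by
  obtain ⟨m, v, rfl⟩ := Matrix.posSemidef_iff_eq_sum_vecMulVec.1 hP
  clear hP
  induction m with
  | zero => simpa using hA
  | succ m ih =>
    obtain ⟨ih_cone, ih_le⟩ := ih (fun i => v i.castSucc)
    rw [Fin.sum_univ_castSucc, ← add_assoc]
    have h_le {j : ℕ} (hj : j ≤ k) := (ih_le j hj).trans
      (sigmaMat_le_sigmaMat_add_vecMulVec ih_cone (v (Fin.last m)) hj)
    rw [inGardingCone_iff] at hA ih_cone ⊢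
    exact ⟨⟨ih_cone.1.add (Matrix.posSemidef_vecMulVec_self_star _).1,
      fun j hj => (hA.2 j hj).trans_le (h_le hj)⟩, fun j hj => h_le hj⟩

theorem InGardingCone.smul {k : ℕ} (hA : InGardingCone k A) {c : ℝ} (hc : 0 < c) :
    InGardingCone k (c • A) := by
  rw [inGardingCone_iff] at hA ⊢
  refine ⟨hA.1.smul (IsSelfAdjoint.all c), fun j hj => ?_⟩
  rw [sigmaMat_smul hA.1]
  exact mul_pos (pow_pos hc j) (hA.2 j hj)

theorem InGardingCone.conj {k : ℕ} (hA : InGardingCone k A) {Q : Matrix (Fin n) (Fin n) ℝ}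
    (hQ : Q * Qᵀ = 1) : InGardingCone k (Qᵀ * A * Q) := by
  rw [inGardingCone_iff] at hA ⊢
  refine ⟨Matrix.isHermitian_conjTranspose_mul_mul Q hA.1, fun j hj => ?_⟩
  rw [sigmaMat_conj hQ hA.1]
  exact hA.2 j hj

theorem sigmaMat_add_smul_one (hA : A.IsHermitian) (t : ℝ) (j : ℕ) :
    sigmaMat j (A + t • 1) = esymmVec j fun i => hA.eigenvalues i + t := by
  obtain ⟨U, hUUt, hUtU, h_eq⟩ := exists_eq_conj_diagonal_eigenvalues hA
  have h_conj : A + t • 1 = U * Matrix.diagonal (fun i => hA.eigenvalues i + t) * Uᵀ := by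
    conv_lhs => rw [h_eq]
    rw [← Matrix.diagonal_add, ← Matrix.smul_one_eq_diagonal, Matrix.mul_add, Matrix.add_mul,
      Matrix.mul_smul, Matrix.smul_mul, mul_one, hUUt]
  rw [sigmaMat_eq_coeff_charpolyRev (hA.add (Matrix.isHermitian_one.smul (IsSelfAdjoint.all t))),
    h_conj, charpolyRev_neg_conj_diagonal hUtU, esymmVec_eq_coeff_prod]

theorem InGardingCone.add_cnk_mul_pow_le {k : ℕ} (hk : 1 ≤ k) (hkn : k ≤ n)
    (hA : InGardingCone k A) {a t : ℝ} (ha : 0 ≤ a) (ht : 0 ≤ t) (h_le : a ^ k ≤ sigmaMat k A) :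
    (a + cnk n k * t) ^ k ≤ sigmaMat k (A + t • 1) := by
  obtain ⟨hA, h_pos⟩ := inGardingCone_iff.1 hA
  have hk_ne : k ≠ 0 := by omega
  set b := sigmaMat k A ^ (k⁻¹ : ℝ)
  have hb : 0 < b := Real.rpow_pos_of_pos (h_pos k le_rfl) _
  have h_val : sigmaMat k A = b ^ k := (Real.rpow_inv_natCast_pow (h_pos k le_rfl).le hk_ne).symm
  have hab : a ≤ b := le_of_pow_le_pow_left₀ hk_ne hb.le (h_le.trans_eq h_val)
  have hc : 0 ≤ cnk n k * t := mul_nonneg (cnk_pos hkn).le ht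
  rw [sigmaMat_add_smul_one hA]
  calc (a + cnk n k * t) ^ k ≤ (b + cnk n k * t) ^ k := by gcongr
    _ ≤ _ := add_cnk_mul_pow_le_esymmVec_add_const hk hkn
        (fun j hj => sigmaMat_eq_esymmVec hA j ▸ h_pos j hj) hb ht
        (sigmaMat_eq_esymmVec hA k ▸ h_val)

theorem InGardingCone.sigmaMat_lt_add_smul_one {k : ℕ} (hk : 1 ≤ k) (hkn : k ≤ n)
    (hA : InGardingCone k A) {t : ℝ} (ht : 0 < t) : sigmaMat k A < sigmaMat k (A + t • 1) := by
  have h_pos := (inGardingCone_iff.1 hA).2 k le_rfl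
  set a := sigmaMat k A ^ (k⁻¹ : ℝ)
  have ha : 0 < a := Real.rpow_pos_of_pos h_pos _
  have h_val : sigmaMat k A = a ^ k := (Real.rpow_inv_natCast_pow h_pos.le (by omega)).symm
  calc sigmaMat k A = a ^ k := h_val
    _ < (a + cnk n k * t) ^ k :=
        pow_lt_pow_left₀ (lt_add_of_pos_right a (mul_pos (cnk_pos hkn) ht)) ha.le (by omega)
    _ ≤ sigmaMat k (A + t • 1) := hA.add_cnk_mul_pow_le hk hkn ha.le ht.le h_val.ge

end HessianOperators

section SecondDerivatives

theorem deriv_deriv_nonpos_of_isLocalMax {g : ℝ → ℝ} {a : ℝ} (h : IsLocalMax g a)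
    (hg : ContinuousAt g a) : deriv (deriv g) a ≤ 0 := by
  by_contra! h_pos
  have h_min : IsLocalMin g a := isLocalMin_of_deriv_deriv_pos h_pos h.deriv_eq_zero hg
  have h_const : g =ᶠ[𝓝 a] fun _ => g a := by
    filter_upwards [h, h_min] with t h_le h_ge using le_antisymm h_le h_ge
  rw [h_const.deriv.deriv_eq, deriv_const', deriv_const] at h_pos
  exact h_pos.false

theorem fderiv_fderiv_nonpos_of_isLocalMax {E : Type*} [NormedAddCommGroup E] [NormedSpace ℝ E]
    {f : E → ℝ} {x : E} (hf : ContDiffAt ℝ 2 f x) (h : IsLocalMax f x) (v : E) :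
    fderiv ℝ (fderiv ℝ f) x v v ≤ 0 := by
  have h_line (t : ℝ) : HasDerivAt (fun t : ℝ => x + t • v) v t := by
    simpa using ((hasDerivAt_id t).smul_const v).const_add x
  have h_tendsto : Tendsto (fun t : ℝ => x + t • v) (𝓝 0) (𝓝 x) := by
    simpa using (h_line 0).continuousAt.tendsto
  have h_deriv : ∀ᶠ t in 𝓝 (0 : ℝ),
      HasDerivAt (fun t : ℝ => f (x + t • v)) (fderiv ℝ f (x + t • v) v) t := by
    filter_upwards [h_tendsto.eventually (hf.eventually (by simp))] with t ht
    exact (ht.differentiableAt (by simp)).hasFDerivAt.comp_hasDerivAt t (h_line t)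
  have h_fderiv : HasFDerivAt (fderiv ℝ f) (fderiv ℝ (fderiv ℝ f) x) x :=
    ((hf.fderiv_right (m := 1) (by norm_num)).differentiableAt (by simp)).hasFDerivAt
  have h_deriv_two : HasDerivAt (fun t : ℝ => fderiv ℝ f (x + t • v) v)
      (fderiv ℝ (fderiv ℝ f) x v v) 0 := by
    have h_comp : HasDerivAt (fun t : ℝ => fderiv ℝ f (x + t • v)) (fderiv ℝ (fderiv ℝ f) x v) 0 :=
      h_fderiv.comp_hasDerivAt_of_eq 0 (h_line 0) (by rw [zero_smul, add_zero])
    simpa only [map_zero, add_zero] using h_comp.clm_apply (hasDerivAt_const (0 : ℝ) v)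
  have h_max : IsLocalMax (fun t : ℝ => f (x + t • v)) 0 := by
    filter_upwards [h_tendsto.eventually h] with t ht
    simpa using ht
  calc fderiv ℝ (fderiv ℝ f) x v v
      = deriv (deriv fun t : ℝ => f (x + t • v)) 0 := by
        rw [EventuallyEq.deriv_eq (h_deriv.mono fun t ht => ht.deriv), h_deriv_two.deriv]
    _ ≤ 0 := deriv_deriv_nonpos_of_isLocalMax h_max h_deriv.self_of_nhds.continuousAt

end SecondDerivatives

section Hessians

open scoped Matrix

variable {n : ℕ} {f g : Euc n → ℝ} {x : Euc n}

theorem hessian_apply (f : Euc n → ℝ) (x : Euc n) (i j : Fin n) :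
    hessian f x i j = fderiv ℝ (fderiv ℝ f) x (EuclideanSpace.single i 1)
      (EuclideanSpace.single j 1) := by
  rw [hessian, iteratedFDeriv_two_apply]
  rfl

theorem isHermitian_hessian (hf : ContDiffAt ℝ 2 f x) : (hessian f x).IsHermitian := by
  ext i j
  rw [Matrix.conjTranspose_apply, star_trivial, hessian_apply, hessian_apply]
  exact hf.isSymmSndFDerivAt (by simp) _ _

theorem fderiv_fderiv_eq_sum_hessian (f : Euc n → ℝ) (x v w : Euc n) :
    fderiv ℝ (fderiv ℝ f) x v w = ∑ i, ∑ j, v i * hessian f x i j * w j := by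
  have h_basis (z : Euc n) : z = ∑ i, z i • EuclideanSpace.single i (1 : ℝ) := by
    ext j
    simp [Finset.sum_apply, Pi.single_apply]
  conv_lhs => rw [h_basis v, h_basis w]
  simp only [map_sum, sum_apply, map_smul, smul_apply, smul_eq_mul, Finset.mul_sum, hessian_apply]
  rw [Finset.sum_comm]
  exact Finset.sum_congr rfl fun i _ => Finset.sum_congr rfl fun j _ => by ring

theorem dotProduct_hessian_mulVec (f : Euc n → ℝ) (x v : Euc n) :
    v ⬝ᵥ hessian f x *ᵥ v = fderiv ℝ (fderiv ℝ f) x v v := by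
  simp only [fderiv_fderiv_eq_sum_hessian, dotProduct, Matrix.mulVec, Finset.mul_sum, mul_assoc]

theorem posSemidef_neg_hessian_of_isLocalMax (hf : ContDiffAt ℝ 2 f x) (h : IsLocalMax f x) :
    (-hessian f x).PosSemidef := by
  refine .of_dotProduct_mulVec_nonneg (isHermitian_hessian hf).neg fun w => ?_
  rw [star_trivial, Matrix.neg_mulVec, dotProduct_neg, Left.nonneg_neg_iff]
  exact (dotProduct_hessian_mulVec f x (WithLp.toLp 2 w)).trans_le
    (fderiv_fderiv_nonpos_of_isLocalMax hf h _)

theorem hessian_add (hf : ContDiffAt ℝ 2 f x) (hg : ContDiffAt ℝ 2 g x) :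
    hessian (f + g) x = hessian f x + hessian g x := by
  ext i j
  simp [hessian, iteratedFDeriv_add_apply (i := 2) hf hg]

theorem hessian_sub (hf : ContDiffAt ℝ 2 f x) (hg : ContDiffAt ℝ 2 g x) :
    hessian (f - g) x = hessian f x - hessian g x := by
  ext i j
  simp [hessian, iteratedFDeriv_sub_apply (i := 2) hf hg]

theorem hessian_smul (hf : ContDiffAt ℝ 2 f x) (c : ℝ) :
    hessian (c • f) x = c • hessian f x := by
  ext i j
  simp [hessian, iteratedFDeriv_const_smul_apply (i := 2) hf]

theorem hessian_const (c : ℝ) (x : Euc n) : hessian (fun _ => c) x = 0 := by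
  ext i j
  simp [hessian_apply]

theorem hessian_norm_sq (x : Euc n) : hessian (fun y => ‖y‖ ^ 2) x = (2 : ℝ) • 1 := by
  have h_fderiv : fderiv ℝ (fun y : Euc n => ‖y‖ ^ 2) = ⇑(2 • innerSL ℝ (E := Euc n)) :=
    fderiv_norm_sq
  ext i j
  rw [hessian_apply, h_fderiv, (2 • innerSL ℝ (E := Euc n)).fderiv]
  change 2 • ⟪EuclideanSpace.single i (1 : ℝ), EuclideanSpace.single j (1 : ℝ)⟫ = _
  simp [EuclideanSpace.inner_single_left, Matrix.one_apply]

theorem hessian_comp_sub_right (f : Euc n → ℝ) (a x : Euc n) :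
    hessian (fun y => f (y - a)) x = hessian f (x - a) := by
  ext i j
  rw [hessian, iteratedFDeriv_comp_sub, hessian]

theorem contDiff_underSol (k : ℕ) (x₀ : Euc n) (ε M : ℝ) : ContDiff ℝ 2 (underSol k x₀ ε M) :=
  ((((contDiff_norm_sq ℝ).comp (contDiff_id.sub contDiff_const)).div_const _).sub
    contDiff_const).sub contDiff_const

theorem hessian_underSol (k : ℕ) (x₀ : Euc n) (ε M : ℝ) (x : Euc n) :
    hessian (underSol k x₀ ε M) x = (cnk n k)⁻¹ • 1 := by
  have h_smooth : ContDiffAt ℝ 2 (fun y : Euc n => ‖y - x₀‖ ^ 2) x :=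
    ((contDiff_norm_sq ℝ).comp (contDiff_id.sub contDiff_const)).contDiffAt
  have h_smul : ContDiffAt ℝ 2 ((2 * cnk n k)⁻¹ • fun y : Euc n => ‖y - x₀‖ ^ 2) x :=
    h_smooth.const_smul (2 * cnk n k)⁻¹
  have h_eq : underSol k x₀ ε M = (2 * cnk n k)⁻¹ • (fun y => ‖y - x₀‖ ^ 2)
      + fun _ => -(ε ^ 2 / (2 * cnk n k)) - M := by
    ext y
    simp only [underSol, Pi.add_apply, Pi.smul_apply, smul_eq_mul]
    ring
  rw [h_eq, hessian_add h_smul contDiffAt_const, hessian_smul h_smooth,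
    hessian_comp_sub_right fun y => ‖y‖ ^ 2, hessian_norm_sq, hessian_const, add_zero, smul_smul,
    mul_inv_rev, inv_mul_cancel_right₀ two_ne_zero]

/-- The matrix of the linear map `R` in the standard basis. -/
def isometryMatrix (R : Euc n ≃ₗᵢ[ℝ] Euc n) : Matrix (Fin n) (Fin n) ℝ :=
  fun i j => R (EuclideanSpace.single j 1) i

theorem isometryMatrix_mul_transpose (R : Euc n ≃ₗᵢ[ℝ] Euc n) :
    isometryMatrix R * (isometryMatrix R)ᵀ = 1 := by
  rw [mul_eq_one_comm]
  ext i j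
  calc ((isometryMatrix R)ᵀ * isometryMatrix R) i j
      = ⟪R (EuclideanSpace.single j 1), R (EuclideanSpace.single i 1)⟫ := by
        simp only [Matrix.mul_apply, Matrix.transpose_apply, isometryMatrix, PiLp.inner_apply,
          RCLike.inner_apply, conj_trivial]
    _ = (1 : Matrix (Fin n) (Fin n) ℝ) i j := by
        rw [R.inner_map_map]
        simp [EuclideanSpace.inner_single_left, Matrix.one_apply, eq_comm]

theorem hessian_comp_linearIsometryEquiv (f : Euc n → ℝ) (R : Euc n ≃ₗᵢ[ℝ] Euc n) (x : Euc n) :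
    hessian (f ∘ R) x = (isometryMatrix R)ᵀ * hessian f (R x) * isometryMatrix R := by
  have h_comp := R.toContinuousLinearEquiv.iteratedFDerivWithin_comp_right f uniqueDiffOn_univ
    (mem_univ (R.toContinuousLinearEquiv x)) 2
  rw [preimage_univ, iteratedFDerivWithin_univ, iteratedFDerivWithin_univ] at h_comp
  ext i j
  calc hessian (f ∘ R) x i j
      = fderiv ℝ (fderiv ℝ f) (R x) (R (EuclideanSpace.single i 1))
          (R (EuclideanSpace.single j 1)) := by
        change iteratedFDeriv ℝ 2 (f ∘ R.toContinuousLinearEquiv) x _ = _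
        rw [h_comp, ContinuousMultilinearMap.compContinuousLinearMap_apply,
          iteratedFDeriv_two_apply]
        rfl
    _ = ((isometryMatrix R)ᵀ * hessian f (R x) * isometryMatrix R) i j := by
        simp only [fderiv_fderiv_eq_sum_hessian, Matrix.mul_apply, Matrix.transpose_apply,
          Finset.sum_mul]
        exact Finset.sum_comm

theorem hessianWithin_eq_hessian (f : Euc n → ℝ) {s : Set (Euc n)} (hs : s ∈ 𝓝 x) :
    hessianWithin f s x = hessian f x := by
  have h_within : iteratedFDerivWithin ℝ 2 f s x = iteratedFDeriv ℝ 2 f x := by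
    rw [← iteratedFDerivWithin_univ]
    exact iteratedFDerivWithin_congr_set (by simpa using hs) 2
  ext i j
  rw [hessianWithin, hessian, h_within]

end Hessians

section ComparisonPrinciple

variable {n k : ℕ} {A B : Matrix (Fin n) (Fin n) ℝ} {D : Set (Euc n)} {κ : ℝ} {u v : Euc n → ℝ}

theorem sigmaMat_zero_right (hk : 1 ≤ k) : sigmaMat k (0 : Matrix (Fin n) (Fin n) ℝ) = 0 := by
  have h := sigmaMat_smul (Matrix.isHermitian_zero (n := Fin n) (α := ℝ)) k 0
  rwa [zero_smul, zero_pow (by omega), zero_mul] at h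

theorem InGardingCone.not_posSemidef_neg (hk : 1 ≤ k) (hA : InGardingCone k A) :
    ¬(-A).PosSemidef := by
  intro h_neg
  have h_le := (hA.add_and_sigmaMat_le_add h_neg).2 k le_rfl
  rw [add_neg_cancel, sigmaMat_zero_right hk] at h_le
  exact ((inGardingCone_iff.1 hA).2 k le_rfl).not_ge h_le

theorem InGardingCone.sigmaMat_lt_of_posSemidef_sub (hk : 1 ≤ k) (hkn : k ≤ n)
    (hA : InGardingCone k A) {t : ℝ} (ht : 0 < t) (h : (B - (A + t • 1)).PosSemidef) :
    sigmaMat k A < sigmaMat k B := by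
  have hAt : InGardingCone k (A + t • 1) :=
    (hA.add_and_sigmaMat_le_add (Matrix.PosSemidef.one.smul ht.le)).1
  calc sigmaMat k A < sigmaMat k (A + t • 1) := hA.sigmaMat_lt_add_smul_one hk hkn ht
    _ ≤ sigmaMat k (A + t • 1 + (B - (A + t • 1))) := (hAt.add_and_sigmaMat_le_add h).2 k le_rfl
    _ = sigmaMat k B := by rw [add_sub_cancel]

/-- `v` is a `C²` strictly `k`-convex subsolution of `σ_k(D²v) = κ` in `D`. -/
def IsSubsolution (k : ℕ) (D : Set (Euc n)) (κ : ℝ) (v : Euc n → ℝ) : Prop :=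
  ∀ x ∈ D, ContDiffAt ℝ 2 v x ∧ InGardingCone k (hessian v x) ∧ κ ≤ sigmaMat k (hessian v x)

/-- `u` is a `C²` supersolution of `σ_k(D²u) = κ` in `D`; it need not be `k`-convex. -/
def IsSupersolution (k : ℕ) (D : Set (Euc n)) (κ : ℝ) (u : Euc n → ℝ) : Prop :=
  ∀ x ∈ D, ContDiffAt ℝ 2 u x ∧ sigmaMat k (hessian u x) ≤ κ

theorem IsSubsolution.mono {D' : Set (Euc n)} (hv : IsSubsolution k D κ v) (h : D' ⊆ D) :
    IsSubsolution k D' κ v :=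
  fun x hx => hv x (h hx)

theorem IsSupersolution.mono {D' : Set (Euc n)} (hu : IsSupersolution k D κ u) (h : D' ⊆ D) :
    IsSupersolution k D' κ u :=
  fun x hx => hu x (h hx)

theorem IsSubsolution.of_le {κ' : ℝ} (hv : IsSubsolution k D κ v) (h : κ' ≤ κ) :
    IsSubsolution k D κ' v :=
  fun x hx => ⟨(hv x hx).1, (hv x hx).2.1, h.trans (hv x hx).2.2⟩

theorem IsSubsolution.smul (hv : IsSubsolution k D κ v) {c : ℝ} (hc : 0 < c) :
    IsSubsolution k D (c ^ k * κ) (c • v) := by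
  intro x hx
  obtain ⟨h_smooth, h_cone, h_le⟩ := hv x hx
  rw [hessian_smul h_smooth, sigmaMat_smul (isHermitian_hessian h_smooth)]
  exact ⟨h_smooth.const_smul c, h_cone.smul hc, by gcongr⟩

theorem IsSupersolution.smul (hu : IsSupersolution k D κ u) {c : ℝ} (hc : 0 ≤ c) :
    IsSupersolution k D (c ^ k * κ) (c • u) := by
  intro x hx
  obtain ⟨h_smooth, h_le⟩ := hu x hx
  rw [hessian_smul h_smooth, sigmaMat_smul (isHermitian_hessian h_smooth)]
  exact ⟨h_smooth.const_smul c, by gcongr⟩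

theorem IsSubsolution.comp_linearIsometryEquiv (hv : IsSubsolution k D κ v)
    (R : Euc n ≃ₗᵢ[ℝ] Euc n) : IsSubsolution k (R ⁻¹' D) κ (v ∘ R) := by
  intro x hx
  obtain ⟨h_smooth, h_cone, h_le⟩ := hv (R x) hx
  have hQ := isometryMatrix_mul_transpose R
  rw [hessian_comp_linearIsometryEquiv, sigmaMat_conj hQ (isHermitian_hessian h_smooth)]
  exact ⟨h_smooth.comp x R.contDiff.contDiffAt, h_cone.conj hQ, h_le⟩

theorem IsSubsolution.add_smul_underSol (hk : 1 ≤ k) (hkn : k ≤ n) {a s : ℝ} (ha : 0 ≤ a)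
    (hs : 0 ≤ s) (hv : IsSubsolution k D (a ^ k) v) (x₀ : Euc n) (ε M : ℝ) :
    IsSubsolution k D ((a + s) ^ k) (v + s • underSol k x₀ ε M) := by
  intro x hx
  obtain ⟨h_smooth, h_cone, h_le⟩ := hv x hx
  have hc : 0 < cnk n k := cnk_pos hkn
  have h_quad : ContDiffAt ℝ 2 (underSol k x₀ ε M) x := (contDiff_underSol k x₀ ε M).contDiffAt
  have h_smul : ContDiffAt ℝ 2 (s • underSol k x₀ ε M) x := h_quad.const_smul s
  have ht : 0 ≤ s * (cnk n k)⁻¹ := by positivity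
  rw [hessian_add h_smooth h_smul, hessian_smul h_quad, hessian_underSol, smul_smul]
  refine ⟨h_smooth.add h_smul,
    (h_cone.add_and_sigmaMat_le_add (Matrix.PosSemidef.one.smul ht)).1, ?_⟩
  calc (a + s) ^ k = (a + cnk n k * (s * (cnk n k)⁻¹)) ^ k := by field_simp
    _ ≤ _ := h_cone.add_cnk_mul_pow_le hk hkn ha ht h_le

theorem IsSubsolution.lt_of_frontier_le (hk : 1 ≤ k) (hv : IsSubsolution k D κ v) (hD : IsOpen D)
    (hDb : IsBounded D) (hv_cont : ContinuousOn v (closure D)) {c : ℝ}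
    (h_bdry : ∀ x ∈ frontier D, v x ≤ c) : ∀ x ∈ D, v x < c := by
  have not_isMaxOn {y : Euc n} (hy : y ∈ D) : ¬IsMaxOn v (closure D) y := fun h_max =>
    (hv y hy).2.1.not_posSemidef_neg hk <| posSemidef_neg_hessian_of_isLocalMax (hv y hy).1 <|
      h_max.isLocalMax (mem_of_superset (hD.mem_nhds hy) subset_closure)
  intro x hx
  obtain ⟨y, hy, h_max⟩ := hDb.isCompact_closure.exists_isMaxOn ⟨x, subset_closure hx⟩ hv_cont
  have hy_bdry : y ∈ frontier D := ⟨hy, fun hy_int => not_isMaxOn (interior_subset hy_int) h_max⟩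
  by_contra! h_le
  exact not_isMaxOn hx fun z hz => (h_max hz).trans ((h_bdry y hy_bdry).trans h_le)

theorem IsSubsolution.not_isLocalMax_sub_add_smul_norm_sq (hk : 1 ≤ k) (hkn : k ≤ n)
    (hv : IsSubsolution k D κ v) (hu : IsSupersolution k D κ u) {δ : ℝ} (hδ : 0 < δ) {x : Euc n}
    (hx : x ∈ D) : ¬IsLocalMax (v - u + δ • fun y => ‖y‖ ^ 2) x := by
  intro h_max
  obtain ⟨hv_smooth, hv_cone, hv_le⟩ := hv x hx
  obtain ⟨hu_smooth, hu_le⟩ := hu x hx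
  have h_norm : ContDiffAt ℝ 2 (fun y : Euc n => ‖y‖ ^ 2) x := (contDiff_norm_sq ℝ).contDiffAt
  have h_sub : ContDiffAt ℝ 2 (v - u) x := hv_smooth.sub hu_smooth
  have h_pen : ContDiffAt ℝ 2 (δ • fun y : Euc n => ‖y‖ ^ 2) x := h_norm.const_smul δ
  have h_psd := posSemidef_neg_hessian_of_isLocalMax (f := v - u + δ • fun y => ‖y‖ ^ 2)
    (h_sub.add h_pen) h_max
  rw [hessian_add h_sub h_pen, hessian_sub hv_smooth hu_smooth, hessian_smul h_norm,
    hessian_norm_sq, smul_smul,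
    show -(hessian v x - hessian u x + (δ * 2) • (1 : Matrix (Fin n) (Fin n) ℝ))
      = hessian u x - (hessian v x + (δ * 2) • 1) by abel] at h_psd
  exact (hv_le.trans_lt
    (hv_cone.sigmaMat_lt_of_posSemidef_sub hk hkn (by positivity) h_psd)).not_ge hu_le

theorem IsSubsolution.le_of_frontier_le (hk : 1 ≤ k) (hkn : k ≤ n) (hv : IsSubsolution k D κ v)
    (hu : IsSupersolution k D κ u) (hDb : IsBounded D)
    (hv_cont : ContinuousOn v (closure D)) (hu_cont : ContinuousOn u (closure D))
    (h_bdry : ∀ x ∈ frontier D, v x ≤ u x) : ∀ x ∈ closure D, v x ≤ u x := by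
  intro y hy
  obtain ⟨r, hr⟩ := hDb.closure.exists_norm_le
  have h_penalized (δ : ℝ) (hδ : 0 < δ) : v y ≤ u y + δ * r ^ 2 := by
    have h_cont : ContinuousOn (v - u + δ • fun y => ‖y‖ ^ 2) (closure D) :=
      (hv_cont.sub hu_cont).add ((continuous_norm.pow 2).const_smul δ).continuousOn
    obtain ⟨x, hx, h_max⟩ := hDb.isCompact_closure.exists_isMaxOn ⟨y, hy⟩ h_cont
    have hx_bdry : x ∈ frontier D := ⟨hx, fun hx_int =>
      hv.not_isLocalMax_sub_add_smul_norm_sq hk hkn hu hδ (interior_subset hx_int) <|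
        h_max.isLocalMax (mem_of_superset (mem_interior_iff_mem_nhds.1 hx_int) subset_closure)⟩
    have h_le : v y - u y + δ * ‖y‖ ^ 2 ≤ v x - u x + δ * ‖x‖ ^ 2 := h_max hy
    have h_norm : δ * ‖x‖ ^ 2 ≤ δ * r ^ 2 := by gcongr; exact hr x hx
    have h_nonneg : 0 ≤ δ * ‖y‖ ^ 2 := by positivity
    linarith [h_bdry x hx_bdry]
  refine le_of_forall_pos_le_add fun η hη =>
    (h_penalized (η / (r ^ 2 + 1)) (by positivity)).trans ?_
  have h_frac : r ^ 2 / (r ^ 2 + 1) ≤ 1 := div_le_one_of_le₀ (by linarith) (by positivity)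
  calc u y + η / (r ^ 2 + 1) * r ^ 2 = u y + η * (r ^ 2 / (r ^ 2 + 1)) := by ring
    _ ≤ u y + η := by nlinarith

end ComparisonPrinciple

section DistanceToBoundary

variable {E F : Type*} [NormedAddCommGroup E] [NormedSpace ℝ E] [NormedAddCommGroup F]
  [NormedSpace ℝ F] {U : Set E} {f : E → F}

theorem exists_eventually_norm_fderiv_le_of_contDiffWithinAt_closure (hU : IsOpen U) {x : E}
    (hx : x ∈ closure U) (hf : ContDiffWithinAt ℝ 1 f (closure U) x) :
    ∃ L : ℝ, ∀ᶠ y in 𝓝[closure U] x, y ∈ U → ‖fderiv ℝ f y‖ ≤ L := by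
  obtain ⟨V, hV, -, f', hf', hf'_cont⟩ :=
    (contDiffWithinAt_succ_iff_hasFDerivWithinAt (n := 0) (by simp)).1 (by simpa using hf)
  rw [insert_eq_of_mem hx] at hV
  have h_bound : ∀ᶠ y in 𝓝[V] x, ‖f' y‖ < ‖f' x‖ + 1 :=
    hf'_cont.continuousWithinAt.norm.eventually (gt_mem_nhds (lt_add_one _))
  refine ⟨‖f' x‖ + 1, ?_⟩
  filter_upwards [nhdsWithin_le_of_mem hV h_bound, hV, eventually_eventually_nhdsWithin.2 hV]
    with y hy hyV hy_nhds hyU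
  have hV_nhds : V ∈ 𝓝 y := by
    rwa [← nhdsWithin_eq_nhds.2 (mem_of_superset (hU.mem_nhds hyU) subset_closure)]
  rw [((hf' y hyV).hasFDerivAt hV_nhds).fderiv]
  exact hy.le

theorem exists_norm_fderiv_le_of_contDiffOn_closure (hU : IsOpen U)
    (hU_compact : IsCompact (closure U)) (hf : ContDiffOn ℝ 1 f (closure U)) :
    ∃ L : ℝ, ∀ x ∈ U, ‖fderiv ℝ f x‖ ≤ L := by
  suffices h : ∃ L : ℝ, ∀ x ∈ closure U, x ∈ U → ‖fderiv ℝ f x‖ ≤ L by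
    obtain ⟨L, hL⟩ := h
    exact ⟨L, fun x hx => hL x (subset_closure hx) hx⟩
  refine hU_compact.induction_on (p := fun s => ∃ L : ℝ, ∀ x ∈ s, x ∈ U → ‖fderiv ℝ f x‖ ≤ L)
    ⟨0, by simp⟩ (fun s t hst ⟨L, hL⟩ => ⟨L, fun x hx => hL x (hst hx)⟩) ?_ fun x hx => ?_
  · rintro s t ⟨L₁, h₁⟩ ⟨L₂, h₂⟩
    refine ⟨max L₁ L₂, fun x hx hxU => hx.elim (fun h => ?_) fun h => ?_⟩
    · exact (h₁ x h hxU).trans (le_max_left _ _)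
    · exact (h₂ x h hxU).trans (le_max_right _ _)
  · obtain ⟨L, hL⟩ := exists_eventually_norm_fderiv_le_of_contDiffWithinAt_closure hU hx (hf x hx)
    exact ⟨_, hL, L, fun y hy => hy⟩

theorem exists_first_exit (hU : IsOpen U) {x y : E} (hx : x ∈ closure U) (hy : y ∉ U) :
    ∃ b ∈ Icc (0 : ℝ) 1, AffineMap.lineMap x y b ∈ frontier U ∧
      ∀ t ∈ Ico 0 b, AffineMap.lineMap x y t ∈ U := by
  have h_cont : Continuous (AffineMap.lineMap x y : ℝ → E) := AffineMap.lineMap_continuous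
  have h_compact : IsCompact (Icc (0 : ℝ) 1 ∩ AffineMap.lineMap x y ⁻¹' Uᶜ) :=
    isCompact_Icc.inter_right (hU.isClosed_compl.preimage h_cont)
  obtain ⟨b, ⟨hb_mem, hb_exit⟩, hb_least⟩ := h_compact.exists_isLeast ⟨1, by simpa using hy⟩
  have h_before : ∀ t ∈ Ico 0 b, AffineMap.lineMap x y t ∈ U := by
    intro t ht
    by_contra ht_exit
    exact (hb_least ⟨⟨ht.1, ht.2.le.trans hb_mem.2⟩, ht_exit⟩).not_gt ht.2
  refine ⟨b, hb_mem, ⟨?_, hU.interior_eq.symm ▸ hb_exit⟩, h_before⟩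
  rcases hb_mem.1.eq_or_lt with rfl | hb_pos
  · simpa using hx
  · refine (show MapsTo _ (Ico 0 b) U from h_before).closure h_cont ?_
    rw [closure_Ico hb_pos.ne]
    exact right_mem_Icc.2 hb_pos.le

theorem norm_le_mul_norm_sub_of_frontier_eq_zero (hU : IsOpen U) (hf : ContinuousOn f (closure U))
    (hf_diff : DifferentiableOn ℝ f U) {L : ℝ} (hL : ∀ x ∈ U, ‖fderiv ℝ f x‖ ≤ L)
    (hf_zero : ∀ x ∈ frontier U, f x = 0) {x y : E} (hx : x ∈ closure U) (hy : y ∉ U) :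
    ‖f x‖ ≤ L * ‖x - y‖ := by
  have hL_nonneg : 0 ≤ L :=
    have ⟨z, hz⟩ := closure_nonempty_iff.1 ⟨x, hx⟩
    (norm_nonneg _).trans (hL z hz)
  obtain ⟨b, ⟨hb_nonneg, hb_le⟩, hb_exit, h_before⟩ := exists_first_exit hU hx hy
  have h_maps : MapsTo (AffineMap.lineMap x y) (Icc 0 b) (closure U) := fun t ht =>
    ht.2.lt_or_eq.elim (fun h => subset_closure (h_before t ⟨ht.1, h⟩))
      fun h => h ▸ frontier_subset_closure hb_exit
  have h_deriv : ∀ t ∈ Ico 0 b, HasDerivWithinAt (f ∘ AffineMap.lineMap x y)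
      (fderiv ℝ f (AffineMap.lineMap x y t) (y - x)) (Ici t) t := fun t ht =>
    ((hf_diff.differentiableAt (hU.mem_nhds (h_before t ht))).hasFDerivAt.comp_hasDerivAt t
      AffineMap.hasDerivAt_lineMap).hasDerivWithinAt
  have h_segment := norm_image_sub_le_of_norm_deriv_right_le_segment
    (hf.comp AffineMap.lineMap_continuous.continuousOn h_maps) h_deriv
    (fun t ht => (fderiv ℝ f _).le_of_opNorm_le (hL _ (h_before t ht)) (y - x)) b
    (right_mem_Icc.2 hb_nonneg)
  rw [Function.comp_apply, Function.comp_apply, hf_zero _ hb_exit, AffineMap.lineMap_apply_zero,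
    zero_sub, norm_neg, sub_zero, norm_sub_rev] at h_segment
  exact h_segment.trans (mul_le_of_le_one_right (by positivity) hb_le)

end DistanceToBoundary

section Domain

variable {n k : ℕ} {Ω : Set (Euc n)} {x₀ : Euc n} {ε M : ℝ} {u ψ : Euc n → ℝ}

theorem ringSet_subset_closure : ringSet Ω x₀ ε ⊆ closure Ω :=
  closure_mono sdiff_subset

theorem ringSet_subset_compl_ball : ringSet Ω x₀ ε ⊆ (ball x₀ ε)ᶜ :=
  closure_minimal (fun _ hx h => hx.2 (ball_subset_closedBall h)) isOpen_ball.isClosed_compl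

theorem frontier_diff_closedBall_subset :
    frontier (Ω \ closedBall x₀ ε) ⊆ frontier Ω ∪ sphere x₀ ε := by
  refine (frontier_inter_subset Ω (closedBall x₀ ε)ᶜ).trans
    (union_subset_union inter_subset_left ?_)
  rw [frontier_compl]
  exact inter_subset_right.trans frontier_closedBall_subset_sphere

theorem ringSet_eventuallyEq_compl_ball (hΩ : IsOpen Ω) (hε : ε ≠ 0) {p : Euc n} (hp : p ∈ Ω) :
    ringSet Ω x₀ ε =ᶠ[𝓝 p] ((ball x₀ ε)ᶜ : Set (Euc n)) := by
  have h_closure : closure (closedBall x₀ ε)ᶜ = (ball x₀ ε)ᶜ := by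
    rw [closure_compl, interior_closedBall x₀ hε]
  filter_upwards [hΩ.mem_nhds hp] with x hx
  refine propext ⟨fun h => ringSet_subset_compl_ball h, fun h => ?_⟩
  rw [← h_closure] at h
  exact hΩ.inter_closure ⟨hx, h⟩

theorem IsSol.contDiffAt_and_hessian (hΩ : IsOpen Ω) (hu : IsSol k Ω x₀ ε M u) {x : Euc n}
    (hx : x ∈ Ω \ closedBall x₀ ε) :
    ContDiffAt ℝ 2 u x ∧ InGardingCone k (hessian u x) ∧ sigmaMat k (hessian u x) = 1 := by
  have hx_nhds : ringSet Ω x₀ ε ∈ 𝓝 x :=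
    mem_of_superset ((hΩ.sdiff isClosed_closedBall).mem_nhds hx) subset_closure
  rw [← hessianWithin_eq_hessian u hx_nhds]
  exact ⟨hu.1.contDiffAt hx_nhds, hu.2.1 x hx⟩

theorem IsSol.isSubsolution (hΩ : IsOpen Ω) (hu : IsSol k Ω x₀ ε M u) :
    IsSubsolution k (Ω \ closedBall x₀ ε) 1 u := fun _ hx =>
  have ⟨h_smooth, h_cone, h_eq⟩ := hu.contDiffAt_and_hessian hΩ hx
  ⟨h_smooth, h_cone, h_eq.ge⟩

theorem IsSol.isSupersolution (hΩ : IsOpen Ω) (hu : IsSol k Ω x₀ ε M u) :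
    IsSupersolution k (Ω \ closedBall x₀ ε) 1 u := fun _ hx =>
  have ⟨h_smooth, _, h_eq⟩ := hu.contDiffAt_and_hessian hΩ hx
  ⟨h_smooth, h_eq.le⟩

theorem IsSol.nonpos (hk : 1 ≤ k) (hΩ : IsOpen Ω) (hΩb : IsBounded Ω) (hM : 0 ≤ M)
    (hu : IsSol k Ω x₀ ε M u) : ∀ x ∈ ringSet Ω x₀ ε, u x ≤ 0 := by
  have hU : IsOpen (Ω \ closedBall x₀ ε) := hΩ.sdiff isClosed_closedBall
  have h_bdry : ∀ x ∈ frontier (Ω \ closedBall x₀ ε), u x ≤ 0 := fun x hx =>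
    (frontier_diff_closedBall_subset hx).elim (fun h => (hu.2.2.1 x h).le)
      fun h => (hu.2.2.2 x h).trans_le (neg_nonpos.2 hM)
  intro x hx
  by_cases hxU : x ∈ Ω \ closedBall x₀ ε
  · exact ((hu.isSubsolution hΩ).lt_of_frontier_le hk hU (hΩb.subset sdiff_subset)
      hu.1.continuousOn h_bdry x hxU).le
  · exact h_bdry x ⟨hx, hU.interior_eq.symm ▸ hxU⟩

/-- `ψ` is a lower barrier for `σ_k(D²u) = 1` at `∂Ω`: a subsolution vanishing on `∂Ω` which is
`C¹` up to the boundary. -/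
structure IsLowerBarrier (k : ℕ) (Ω : Set (Euc n)) (ψ : Euc n → ℝ) : Prop where
  contDiffOn : ContDiffOn ℝ 1 ψ (closure Ω)
  isSubsolution : IsSubsolution k Ω 1 ψ
  eq_zero : ∀ x ∈ frontier Ω, ψ x = 0

theorem IsSol22.isLowerBarrier (hΩ : IsOpen Ω) (hψ : IsSol22 k Ω ψ) : IsLowerBarrier k Ω ψ where
  contDiffOn := hψ.1.of_le (by exact_mod_cast le_top)
  isSubsolution x hx := by
    have hx_nhds : closure Ω ∈ 𝓝 x := mem_of_superset (hΩ.mem_nhds hx) subset_closure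
    obtain ⟨h_cone, h_eq⟩ := hψ.2.1 x hx
    rw [hessianWithin_eq_hessian ψ hx_nhds] at h_cone h_eq
    exact ⟨(hψ.1.contDiffAt hx_nhds).of_le (WithTop.coe_le_coe.2 le_top), h_cone, h_eq.ge⟩
  eq_zero := hψ.2.2

theorem IsLowerBarrier.lt_zero (hk : 1 ≤ k) (hΩ : IsOpen Ω) (hΩb : IsBounded Ω)
    (hψ : IsLowerBarrier k Ω ψ) : ∀ x ∈ Ω, ψ x < 0 :=
  hψ.isSubsolution.lt_of_frontier_le hk hΩ hΩb hψ.contDiffOn.continuousOn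
    fun x hx => (hψ.eq_zero x hx).le

theorem IsLowerBarrier.exists_mul_le_neg (hk : 1 ≤ k) (hΩ : IsOpen Ω) (hΩb : IsBounded Ω)
    (hψ : IsLowerBarrier k Ω ψ) {K : Set (Euc n)} (hK : IsCompact K) (hKΩ : K ⊆ Ω) (M : ℝ) :
    ∃ A : ℝ, 1 ≤ A ∧ ∀ x ∈ K, A * ψ x ≤ -M := by
  have h_neg : ∀ x ∈ K, ψ x < 0 := fun x hx => hψ.lt_zero hk hΩ hΩb x (hKΩ hx)
  have h_cont : ContinuousOn (fun x => M / ψ x) K :=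
    continuousOn_const.div (hψ.contDiffOn.continuousOn.mono (hKΩ.trans subset_closure))
      fun x hx => (h_neg x hx).ne
  obtain ⟨A, hA⟩ := hK.exists_bound_of_continuousOn h_cont
  refine ⟨max 1 A, le_max_left _ _, fun x hx => ?_⟩
  have h_le : -max 1 A ≤ M / ψ x :=
    (neg_le_neg (le_max_right 1 A)).trans (abs_le.1 (hA x hx)).1
  rw [le_div_iff_of_neg (h_neg x hx)] at h_le
  linarith

theorem IsLowerBarrier.exists_norm_le_mul_norm_sub (hΩ : IsOpen Ω) (hΩb : IsBounded Ω)
    (hψ : IsLowerBarrier k Ω ψ) :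
    ∃ L : ℝ, ∀ x ∈ closure Ω, ∀ y ∉ Ω, ‖ψ x‖ ≤ L * ‖x - y‖ := by
  obtain ⟨L, hL⟩ :=
    exists_norm_fderiv_le_of_contDiffOn_closure hΩ hΩb.isCompact_closure hψ.contDiffOn
  exact ⟨L, fun x hx y hy => norm_le_mul_norm_sub_of_frontier_eq_zero hΩ
    hψ.contDiffOn.continuousOn
    ((hψ.contDiffOn.differentiableOn one_ne_zero).mono subset_closure) hL hψ.eq_zero hx hy⟩

theorem IsLowerBarrier.mul_le_of_isSol (hk : 1 ≤ k) (hkn : k ≤ n) (hΩ : IsOpen Ω)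
    (hΩb : IsBounded Ω) (hψ : IsLowerBarrier k Ω ψ) {A : ℝ} (hA : 1 ≤ A)
    (hA_sphere : ∀ x ∈ sphere x₀ ε, A * ψ x ≤ -M) (hu : IsSol k Ω x₀ ε M u) :
    ∀ x ∈ ringSet Ω x₀ ε, A * ψ x ≤ u x := by
  have h_sub : IsSubsolution k (Ω \ closedBall x₀ ε) 1 (A • ψ) :=
    ((hψ.isSubsolution.smul (zero_lt_one.trans_le hA)).of_le
      (by rw [mul_one]; exact one_le_pow₀ hA)).mono sdiff_subset
  refine h_sub.le_of_frontier_le hk hkn (hu.isSupersolution hΩ) (hΩb.subset sdiff_subset)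
    ((hψ.contDiffOn.continuousOn.mono ringSet_subset_closure).const_smul A)
    hu.1.continuousOn fun x hx => ?_
  rcases frontier_diff_closedBall_subset hx with h | h
  · rw [hψ.eq_zero x h, mul_zero, hu.2.2.1 x h]
  · exact (hA_sphere x h).trans (hu.2.2.2 x h).ge

theorem IsLowerBarrier.exists_neg_mul_norm_sub_le_of_isSol (hk : 1 ≤ k) (hkn : k ≤ n)
    (hΩ : IsOpen Ω) (hΩb : IsBounded Ω) (hψ : IsLowerBarrier k Ω ψ) {ε₀ : ℝ}
    (hball : closedBall x₀ ε₀ ⊆ Ω) (M : ℝ) :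
    ∃ K : ℝ, 0 < K ∧ ∀ ε ≤ ε₀, ∀ u : Euc n → ℝ, IsSol k Ω x₀ ε M u →
      ∀ x ∈ ringSet Ω x₀ ε, ∀ y ∉ Ω, -(K * ‖x - y‖) ≤ u x := by
  obtain ⟨A, hA_one, hA⟩ := hψ.exists_mul_le_neg hk hΩ hΩb (isCompact_closedBall x₀ ε₀) hball M
  obtain ⟨L, hL⟩ := hψ.exists_norm_le_mul_norm_sub hΩ hΩb
  have hA_pos : 0 < A := zero_lt_one.trans_le hA_one
  refine ⟨A * max L 1, by positivity, fun ε hε u hu x hx y hy => ?_⟩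
  have hψ_le : ‖ψ x‖ ≤ max L 1 * ‖x - y‖ :=
    (hL x (ringSet_subset_closure hx) y hy).trans (by gcongr; exact le_max_left L 1)
  calc -(A * max L 1 * ‖x - y‖) = A * -(max L 1 * ‖x - y‖) := by ring
    _ ≤ A * ψ x := mul_le_mul_of_nonneg_left (abs_le.1 hψ_le).1 hA_pos.le
    _ ≤ u x := hψ.mul_le_of_isSol hk hkn hΩ hΩb hA_one
      (fun z hz => hA z (sphere_subset_closedBall.trans (closedBall_subset_closedBall hε) hz))
      hu x hx

end Domain

section Rotations

variable {V : Type*} [NormedAddCommGroup V] [InnerProductSpace ℝ V] {ν τ : V}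

/-- The point at angle `θ` from `ν`, towards `τ`, on the unit circle in the plane of the
orthonormal pair `ν`, `τ`. -/
def circlePoint (ν τ : V) (θ : ℝ) : V :=
  Real.cos θ • ν + Real.sin θ • τ

theorem circlePoint_zero (ν τ : V) : circlePoint ν τ 0 = ν := by
  simp [circlePoint]

theorem hasDerivAt_circlePoint_zero (ν τ : V) : HasDerivAt (circlePoint ν τ) τ 0 := by
  have h : HasDerivAt (circlePoint ν τ) (-Real.sin 0 • ν + Real.cos 0 • τ) 0 :=
    ((Real.hasDerivAt_cos 0).smul_const ν).add ((Real.hasDerivAt_sin 0).smul_const τ)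
  simpa using h

theorem norm_circlePoint (hν : ‖ν‖ = 1) (hτ : ‖τ‖ = 1) (hντ : ⟪ν, τ⟫ = 0) (θ : ℝ) :
    ‖circlePoint ν τ θ‖ = 1 := by
  rw [← sq_eq_sq₀ (norm_nonneg _) zero_le_one, circlePoint, norm_add_sq_real, norm_smul, norm_smul,
    real_inner_smul_left, real_inner_smul_right, hντ, hν, hτ]
  simp

theorem inner_circlePoint (hν : ‖ν‖ = 1) (hντ : ⟪ν, τ⟫ = 0) (θ : ℝ) :
    ⟪ν, circlePoint ν τ θ⟫ = Real.cos θ := by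
  rw [circlePoint, inner_add_right, real_inner_smul_right, real_inner_smul_right, hντ,
    real_inner_self_eq_norm_sq, hν]
  ring

theorem norm_circlePoint_sub_le (hν : ‖ν‖ = 1) (hτ : ‖τ‖ = 1) (hντ : ⟪ν, τ⟫ = 0) (θ : ℝ) :
    ‖circlePoint ν τ θ - ν‖ ≤ |θ| := by
  refine abs_le_of_sq_le_sq' ?_ (abs_nonneg θ) |>.2
  rw [norm_sub_sq_real, norm_circlePoint hν hτ hντ, real_inner_comm, inner_circlePoint hν hντ, hν,
    sq_abs]
  linarith [Real.one_sub_sq_div_two_le_cos (x := θ)]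

theorem reflection_circlePoint_half (hν : ‖ν‖ = 1) (hτ : ‖τ‖ = 1) (hντ : ⟪ν, τ⟫ = 0) (θ : ℝ) :
    (ℝ ∙ circlePoint ν τ (θ / 2)).reflection ν = circlePoint ν τ θ := by
  have h_cos : Real.cos θ = 2 * Real.cos (θ / 2) ^ 2 - 1 := by rw [← Real.cos_two_mul]; ring_nf
  have h_sin : Real.sin θ = 2 * Real.sin (θ / 2) * Real.cos (θ / 2) := by
    rw [← Real.sin_two_mul]; ring_nf
  rw [Submodule.reflection_singleton_apply, norm_circlePoint hν hτ hντ, real_inner_comm,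
    inner_circlePoint hν hντ, circlePoint, circlePoint, h_cos, h_sin]
  simp only [one_pow, div_one, RCLike.ofReal_real_eq_id, id_eq]
  module

theorem norm_reflection_sub_reflection_le {a b : V} (ha : ‖a‖ = 1) (hb : ‖b‖ = 1) (x : V) :
    ‖(ℝ ∙ a).reflection x - (ℝ ∙ b).reflection x‖ ≤ 4 * ‖a - b‖ * ‖x‖ := by
  have h_eq : (ℝ ∙ a).reflection x - (ℝ ∙ b).reflection x
      = (2 : ℝ) • (⟪a - b, x⟫ • a + ⟪b, x⟫ • (a - b)) := by
    rw [Submodule.reflection_singleton_apply, Submodule.reflection_singleton_apply, ha, hb,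
      inner_sub_left]
    simp only [one_pow, div_one, RCLike.ofReal_real_eq_id, id_eq]
    module
  have h_left : |⟪a - b, x⟫| ≤ ‖a - b‖ * ‖x‖ := abs_real_inner_le_norm _ _
  have h_right : |⟪b, x⟫| ≤ ‖x‖ := by simpa [hb] using abs_real_inner_le_norm b x
  calc ‖(ℝ ∙ a).reflection x - (ℝ ∙ b).reflection x‖
      ≤ 2 * (|⟪a - b, x⟫| * ‖a‖ + |⟪b, x⟫| * ‖a - b‖) := by
        rw [h_eq, norm_smul, Real.norm_ofNat, ← Real.norm_eq_abs, ← Real.norm_eq_abs, ← norm_smul,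
          ← norm_smul]
        gcongr
        exact norm_add_le _ _
    _ ≤ 2 * (‖a - b‖ * ‖x‖ * 1 + ‖x‖ * ‖a - b‖) := by rw [ha]; gcongr
    _ = 4 * ‖a - b‖ * ‖x‖ := by ring

theorem exists_linearIsometryEquiv_apply_eq_circlePoint (hν : ‖ν‖ = 1) (hτ : ‖τ‖ = 1)
    (hντ : ⟪ν, τ⟫ = 0) (θ : ℝ) :
    ∃ R : V ≃ₗᵢ[ℝ] V, R ν = circlePoint ν τ θ ∧ ∀ x, ‖R x - x‖ ≤ 2 * |θ| * ‖x‖ := by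
  let a := circlePoint ν τ (θ / 2)
  -- A rotation is the product of the reflections in two lines at half its angle.
  refine ⟨(ℝ ∙ ν).reflection.trans (ℝ ∙ a).reflection, ?_, fun x => ?_⟩
  · rw [LinearIsometryEquiv.trans_apply,
      Submodule.reflection_mem_subspace_eq_self (Submodule.mem_span_singleton_self ν)]
    exact reflection_circlePoint_half hν hτ hντ θ
  · calc ‖(ℝ ∙ a).reflection ((ℝ ∙ ν).reflection x) - x‖
        = ‖(ℝ ∙ a).reflection ((ℝ ∙ ν).reflection x)
            - (ℝ ∙ ν).reflection ((ℝ ∙ ν).reflection x)‖ := by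
          rw [Submodule.reflection_reflection]
      _ ≤ 4 * ‖a - ν‖ * ‖(ℝ ∙ ν).reflection x‖ :=
        norm_reflection_sub_reflection_le (norm_circlePoint hν hτ hντ _) hν _
      _ ≤ 4 * |θ / 2| * ‖x‖ := by
        rw [LinearIsometryEquiv.norm_map]
        gcongr
        exact norm_circlePoint_sub_le hν hτ hντ _
      _ = 2 * |θ| * ‖x‖ := by rw [abs_div, abs_two]; ring

end Rotations

section RotationComparison

variable {n k : ℕ} {Ω : Set (Euc n)} {ε M s δ : ℝ} {u : Euc n → ℝ} {R : Euc n ≃ₗᵢ[ℝ] Euc n}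

theorem underSol_of_mem_sphere (k : ℕ) (M : ℝ) {x₀ x : Euc n} (hx : x ∈ sphere x₀ ε) :
    underSol k x₀ ε M x = -M := by
  rw [underSol, mem_sphere_iff_norm.1 hx, sub_self, zero_sub]

theorem neg_le_underSol (hkn : k ≤ n) (hε : 0 ≤ ε) (M : ℝ) {x₀ x : Euc n} (hx : x ∉ ball x₀ ε) :
    -M ≤ underSol k x₀ ε M x := by
  have hc : 0 < cnk n k := cnk_pos hkn
  rw [mem_ball_iff_norm, not_lt] at hx
  have h_le : ε ^ 2 / (2 * cnk n k) ≤ ‖x - x₀‖ ^ 2 / (2 * cnk n k) := by gcongr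
  rw [underSol]
  linarith

theorem underSol_zero_linearIsometryEquiv_apply (k : ℕ) (ε M : ℝ) (R : Euc n ≃ₗᵢ[ℝ] Euc n)
    (x : Euc n) : underSol k 0 ε M (R x) = underSol k 0 ε M x := by
  rw [underSol, underSol, sub_zero, sub_zero, R.norm_map]

theorem frontier_inter_preimage_subset (R : Euc n ≃ₗᵢ[ℝ] Euc n) (Ω : Set (Euc n)) (ε : ℝ) :
    frontier ((Ω \ closedBall 0 ε) ∩ R ⁻¹' (Ω \ closedBall 0 ε)) ⊆
      frontier Ω ∪ R ⁻¹' frontier Ω ∪ sphere 0 ε := by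
  intro x hx
  rcases frontier_inter_subset _ _ hx with ⟨h, -⟩ | ⟨-, h⟩
  · exact (frontier_diff_closedBall_subset h).imp_left Or.inl
  · have hRx : R x ∈ frontier (Ω \ closedBall 0 ε) := by
      rw [show R ⁻¹' (Ω \ closedBall 0 ε) = R.toHomeomorph ⁻¹' (Ω \ closedBall 0 ε) from rfl,
        ← R.toHomeomorph.preimage_frontier] at h
      exact h
    refine (frontier_diff_closedBall_subset hRx).imp Or.inr fun h_sphere => ?_
    rwa [mem_sphere_zero_iff_norm, R.norm_map, ← mem_sphere_zero_iff_norm] at h_sphere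

theorem IsSol.comp_add_smul_underSol_le_on_frontier (hk : 1 ≤ k) (hΩ : IsOpen Ω)
    (hΩb : IsBounded Ω) (hM : 0 ≤ M) (hs : 0 ≤ s) (hδ : 0 ≤ δ) (hu : IsSol k Ω 0 ε M u)
    (h_gap : ∀ x ∈ frontier Ω, underSol k 0 ε M x ≤ -δ)
    (hR : ∀ x ∈ ringSet Ω 0 ε, R x ∈ frontier Ω → -(s * δ) ≤ (1 + s) * u x) {x : Euc n}
    (hx : x ∈ frontier ((Ω \ closedBall 0 ε) ∩ R ⁻¹' (Ω \ closedBall 0 ε))) :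
    u (R x) + s * underSol k 0 ε M x ≤ (1 + s) * u x := by
  have hx_ring : x ∈ ringSet Ω 0 ε := closure_mono inter_subset_left hx.1
  have hRx_ring : R x ∈ ringSet Ω 0 ε :=
    MapsTo.closure (fun _ hy => hy.2) R.continuous hx.1
  rcases frontier_inter_preimage_subset R Ω ε hx with (h | h) | h
  · rw [hu.2.2.1 x h, mul_zero]
    have h_sub : underSol k 0 ε M x ≤ 0 := (h_gap x h).trans (neg_nonpos.2 hδ)
    exact add_nonpos (hu.nonpos hk hΩ hΩb hM _ hRx_ring) (mul_nonpos_of_nonneg_of_nonpos hs h_sub)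
  · have h_sub := h_gap (R x) h
    rw [underSol_zero_linearIsometryEquiv_apply] at h_sub
    calc u (R x) + s * underSol k 0 ε M x ≤ 0 + s * -δ := by rw [hu.2.2.1 _ h]; gcongr
      _ = -(s * δ) := by ring
      _ ≤ (1 + s) * u x := hR x hx_ring h
  · have hRx : R x ∈ sphere (0 : Euc n) ε := by simpa using h
    rw [hu.2.2.2 _ hRx, hu.2.2.2 x h, underSol_of_mem_sphere k M h]
    linarith

theorem IsSol.comp_add_smul_underSol_le (hk : 1 ≤ k) (hkn : k ≤ n) (hΩ : IsOpen Ω)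
    (hΩb : IsBounded Ω) (hM : 0 ≤ M) (hs : 0 ≤ s) (hδ : 0 ≤ δ) (hu : IsSol k Ω 0 ε M u)
    (h_gap : ∀ x ∈ frontier Ω, underSol k 0 ε M x ≤ -δ)
    (hR : ∀ x ∈ ringSet Ω 0 ε, R x ∈ frontier Ω → -(s * δ) ≤ (1 + s) * u x) {x : Euc n}
    (hx : x ∈ (Ω \ closedBall 0 ε) ∩ R ⁻¹' (Ω \ closedBall 0 ε)) :
    u (R x) + s * underSol k 0 ε M x ≤ (1 + s) * u x := by
  let U := Ω \ closedBall 0 ε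
  have h_sub : IsSubsolution k (U ∩ R ⁻¹' U) ((1 + s) ^ k) (u ∘ R + s • underSol k 0 ε M) := by
    have h_rot : IsSubsolution k (U ∩ R ⁻¹' U) (1 ^ k) (u ∘ R) := by
      rw [one_pow]
      exact ((hu.isSubsolution hΩ).comp_linearIsometryEquiv R).mono inter_subset_right
    exact h_rot.add_smul_underSol hk hkn zero_le_one hs 0 ε M
  have h_super : IsSupersolution k (U ∩ R ⁻¹' U) ((1 + s) ^ k) ((1 + s) • u) := by
    rw [← mul_one ((1 + s) ^ k)]
    exact ((hu.isSupersolution hΩ).smul (by positivity)).mono inter_subset_left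
  have h_cont : ContinuousOn (u ∘ R) (closure (U ∩ R ⁻¹' U)) :=
    hu.1.continuousOn.comp R.continuous.continuousOn <|
      MapsTo.closure (fun _ hx => hx.2) R.continuous
  exact h_sub.le_of_frontier_le hk hkn h_super
    (hΩb.subset (inter_subset_left.trans sdiff_subset))
    (h_cont.add ((contDiff_underSol k 0 ε M).continuous.const_smul s).continuousOn)
    ((hu.1.continuousOn.mono (closure_mono inter_subset_left)).const_smul (1 + s))
    (fun _ => hu.comp_add_smul_underSol_le_on_frontier hk hΩ hΩb hM hs hδ h_gap hR) x
    (subset_closure hx)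

theorem IsSol.comp_add_le_mul_add (hk : 1 ≤ k) (hkn : k ≤ n) (hΩ : IsOpen Ω)
    (hΩb : IsBounded Ω) (hε : 0 ≤ ε) (hM : 0 ≤ M) (hs : 0 ≤ s) (hδ : 0 ≤ δ)
    (hu : IsSol k Ω 0 ε M u) (h_gap : ∀ x ∈ frontier Ω, underSol k 0 ε M x ≤ -δ)
    (hR : ∀ x ∈ ringSet Ω 0 ε, R x ∈ frontier Ω → -(s * δ) ≤ (1 + s) * u x) {x : Euc n}
    (hx : x ∈ (Ω \ closedBall 0 ε) ∩ R ⁻¹' (Ω \ closedBall 0 ε)) :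
    u (R x) + M ≤ (1 + s) * (u x + M) := by
  have h_le := hu.comp_add_smul_underSol_le hk hkn hΩ hΩb hM hs hδ h_gap hR hx
  have h_sub : s * -M ≤ s * underSol k 0 ε M x :=
    mul_le_mul_of_nonneg_left
      (neg_le_underSol hkn hε M fun h => hx.1.2 (ball_subset_closedBall h)) hs
  linarith

end RotationComparison

section ExteriorDerivatives

theorem le_of_hasDerivWithinAt_Ioi_of_eventually_le {f g : ℝ → ℝ} {f' g' a : ℝ}
    (hf : HasDerivWithinAt f f' (Ioi a) a) (hg : HasDerivWithinAt g g' (Ioi a) a)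
    (h_eq : f a = g a) (h_le : ∀ᶠ t in 𝓝[>] a, f t ≤ g t) : f' ≤ g' := by
  rw [hasDerivWithinAt_iff_tendsto_slope' self_notMem_Ioi] at hf hg
  refine le_of_tendsto_of_tendsto hf hg ?_
  filter_upwards [h_le, self_mem_nhdsWithin] with t ht hat
  rw [slope_def_field, slope_def_field, h_eq]
  exact div_le_div_of_nonneg_right (sub_le_sub_right ht _) (sub_nonneg.2 (le_of_lt hat))

theorem uniqueDiffOn_compl_ball {E : Type*} [NormedAddCommGroup E] [NormedSpace ℝ E] (x₀ : E)
    {r : ℝ} (hr : 0 < r) : UniqueDiffOn ℝ (ball x₀ r)ᶜ := by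
  intro x hx
  rw [mem_compl_iff, mem_ball_iff_norm, not_lt] at hx
  have h_radius : 0 < ‖x - x₀‖ := hr.trans_le hx
  -- The ball touching `ball x₀ ‖x - x₀‖` from outside at `x`.
  let B := closedBall (x + (x - x₀)) ‖x - x₀‖
  have hxB : x ∈ B := by simp [B]
  have hB : B ⊆ (ball x₀ r)ᶜ := by
    intro y hy
    rw [mem_closedBall_iff_norm'] at hy
    rw [mem_compl_iff, mem_ball_iff_norm, not_lt]
    have h_center : ‖x + (x - x₀) - x₀‖ = 2 * ‖x - x₀‖ := by
      rw [show x + (x - x₀) - x₀ = (2 : ℝ) • (x - x₀) by module, norm_smul, Real.norm_ofNat]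
    linarith [norm_sub_le_norm_sub_add_norm_sub (x + (x - x₀)) y x₀]
  refine (uniqueDiffOn_convex (convex_closedBall _ _) ?_ x hxB).mono hB
  exact (nonempty_ball.2 h_radius).mono ball_subset_interior_closedBall

variable {V : Type*} [NormedAddCommGroup V] [InnerProductSpace ℝ V] {f : V → ℝ} {ε c : ℝ}
  {ν τ : V}

/-- The derivative of `f` at the point `ε • ν` of the sphere of radius `ε` in the outward normal
direction `ν`, taken from the exterior of the ball. -/
def normalDeriv (f : V → ℝ) (ε : ℝ) (ν : V) : ℝ :=
  fderivWithin ℝ f (ball 0 ε)ᶜ (ε • ν) ν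

theorem smul_mem_compl_ball (hν : ‖ν‖ = 1) {t : ℝ} (ht : 0 ≤ t) (hεt : ε ≤ t) :
    t • ν ∈ (ball 0 ε)ᶜ := by
  rw [mem_compl_iff, mem_ball_zero_iff, norm_smul, hν, mul_one, Real.norm_of_nonneg ht]
  exact hεt.not_gt

theorem smul_mem_sphere (hε : 0 ≤ ε) (hν : ‖ν‖ = 1) : ε • ν ∈ sphere 0 ε := by
  rw [mem_sphere_zero_iff_norm, norm_smul, hν, mul_one, Real.norm_of_nonneg hε]

theorem hasDerivWithinAt_normalDeriv (hε : 0 ≤ ε) (hν : ‖ν‖ = 1)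
    (hf : DifferentiableWithinAt ℝ f (ball 0 ε)ᶜ (ε • ν)) :
    HasDerivWithinAt (fun t : ℝ => f (t • ν)) (normalDeriv f ε ν) (Ioi ε) ε := by
  have h_ray : HasDerivWithinAt (fun t : ℝ => t • ν) ν (Ioi ε) ε := by
    simpa using ((hasDerivAt_id ε).smul_const ν).hasDerivWithinAt
  exact hf.hasFDerivWithinAt.comp_hasDerivWithinAt ε h_ray fun t ht =>
    smul_mem_compl_ball hν (hε.trans (le_of_lt ht)) (le_of_lt ht)

theorem normalDeriv_le_mul_normalDeriv (hε : 0 ≤ ε) {ν' : V} (hν : ‖ν‖ = 1) (hν' : ‖ν'‖ = 1)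
    (hf : ∀ p ∈ sphere 0 ε, DifferentiableWithinAt ℝ f (ball 0 ε)ᶜ p)
    (hf_sphere : ∀ p ∈ sphere 0 ε, f p = c) {a : ℝ}
    (h_le : ∀ᶠ t in 𝓝[>] ε, f (t • ν') - c ≤ a * (f (t • ν) - c)) :
    normalDeriv f ε ν' ≤ a * normalDeriv f ε ν := by
  have h_deriv {ω : V} (hω : ‖ω‖ = 1) :=
    (hasDerivWithinAt_normalDeriv hε hω (hf _ (smul_mem_sphere hε hω))).sub_const c
  refine le_of_hasDerivWithinAt_Ioi_of_eventually_le (h_deriv hν') ((h_deriv hν).const_mul a) ?_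
    h_le
  simp [hf_sphere _ (smul_mem_sphere hε hν), hf_sphere _ (smul_mem_sphere hε hν')]

theorem hasDerivAt_comp_smul_circlePoint {F : Type*} [NormedAddCommGroup F] [NormedSpace ℝ F]
    {g : V → F} (hε : 0 ≤ ε) (hν : ‖ν‖ = 1) (hτ : ‖τ‖ = 1) (hντ : ⟪ν, τ⟫ = 0)
    (hg : DifferentiableWithinAt ℝ g (ball 0 ε)ᶜ (ε • ν)) :
    HasDerivAt (fun θ => g (ε • circlePoint ν τ θ))
      (ε • fderivWithin ℝ g (ball 0 ε)ᶜ (ε • ν) τ) 0 := by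
  rw [← circlePoint_zero ν τ] at hg
  have h_curve : HasDerivWithinAt (fun θ => ε • circlePoint ν τ θ) (ε • τ) univ 0 :=
    ((hasDerivAt_circlePoint_zero ν τ).const_smul ε).hasDerivWithinAt
  have h_comp := hg.hasFDerivWithinAt.comp_hasDerivWithinAt 0 h_curve fun θ _ =>
    smul_mem_compl_ball (norm_circlePoint hν hτ hντ θ) hε le_rfl
  rw [hasDerivWithinAt_univ, map_smul, circlePoint_zero] at h_comp
  exact h_comp

theorem fderivWithin_tangent_eq_zero (hε : 0 < ε) (hν : ‖ν‖ = 1) (hτ : ‖τ‖ = 1) (hντ : ⟪ν, τ⟫ = 0)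
    (hf : DifferentiableWithinAt ℝ f (ball 0 ε)ᶜ (ε • ν)) (hf_sphere : ∀ p ∈ sphere 0 ε, f p = c) :
    fderivWithin ℝ f (ball 0 ε)ᶜ (ε • ν) τ = 0 := by
  have h_deriv := hasDerivAt_comp_smul_circlePoint hε.le hν hτ hντ hf
  have h_const : (fun θ => f (ε • circlePoint ν τ θ)) = fun _ => c :=
    funext fun θ => hf_sphere _ (smul_mem_sphere hε.le (norm_circlePoint hν hτ hντ θ))
  rw [h_const] at h_deriv
  exact (smul_eq_zero.1 (h_deriv.unique (hasDerivAt_const 0 c))).resolve_left hε.ne'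

theorem hasDerivAt_normalDeriv_circlePoint (hε : 0 < ε) (hν : ‖ν‖ = 1) (hτ : ‖τ‖ = 1)
    (hντ : ⟪ν, τ⟫ = 0) (hf : ContDiffWithinAt ℝ 2 f (ball 0 ε)ᶜ (ε • ν))
    (hf_sphere : ∀ p ∈ sphere 0 ε, f p = c) :
    HasDerivAt (fun θ => normalDeriv f ε (circlePoint ν τ θ))
      (ε * iteratedFDerivWithin ℝ 2 f (ball 0 ε)ᶜ (ε • ν) ![τ, ν]) 0 := by
  have hu : UniqueDiffOn ℝ (ball (0 : V) ε)ᶜ := uniqueDiffOn_compl_ball 0 hε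
  have hp : ε • ν ∈ (ball (0 : V) ε)ᶜ := smul_mem_compl_ball hν hε.le le_rfl
  have h_fderiv : ContDiffWithinAt ℝ 1 (fderivWithin ℝ f (ball 0 ε)ᶜ) (ball 0 ε)ᶜ (ε • ν) :=
    hf.fderivWithin_right hu (by norm_num) hp
  have h_curve := hasDerivAt_comp_smul_circlePoint hε.le hν hτ hντ
    (h_fderiv.differentiableWithinAt one_ne_zero)
  have h_prod := h_curve.clm_apply (hasDerivAt_circlePoint_zero ν τ)
  rw [circlePoint_zero, fderivWithin_tangent_eq_zero hε hν hτ hντ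
    (hf.differentiableWithinAt two_ne_zero) hf_sphere, add_zero] at h_prod
  rw [iteratedFDerivWithin_two_apply f hu hp]
  exact h_prod

theorem mul_iteratedFDerivWithin_two_le_mul_normalDeriv (hε : 0 < ε) (hν : ‖ν‖ = 1) (hτ : ‖τ‖ = 1)
    (hντ : ⟪ν, τ⟫ = 0) (hf : ContDiffWithinAt ℝ 2 f (ball 0 ε)ᶜ (ε • ν))
    (hf_sphere : ∀ p ∈ sphere 0 ε, f p = c) {B : ℝ}
    (h_le : ∀ᶠ θ in 𝓝[>] 0,
      normalDeriv f ε (circlePoint ν τ θ) ≤ (1 + B * θ) * normalDeriv f ε ν) :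
    ε * iteratedFDerivWithin ℝ 2 f (ball 0 ε)ᶜ (ε • ν) ![τ, ν] ≤ B * normalDeriv f ε ν := by
  have h_deriv := hasDerivAt_normalDeriv_circlePoint hε hν hτ hντ hf hf_sphere
  have h_linear : HasDerivAt (fun θ : ℝ => (1 + B * θ) * normalDeriv f ε ν)
      (B * normalDeriv f ε ν) 0 := by
    simpa using (((hasDerivAt_id (0 : ℝ)).const_mul B).const_add 1).mul_const (normalDeriv f ε ν)
  refine le_of_hasDerivWithinAt_Ioi_of_eventually_le h_deriv.hasDerivWithinAt
    h_linear.hasDerivWithinAt ?_ h_le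
  simp [circlePoint_zero]

theorem mul_abs_iteratedFDerivWithin_two_le_mul_normalDeriv (hε : 0 < ε) (hν : ‖ν‖ = 1)
    (hτ : ‖τ‖ = 1) (hντ : ⟪ν, τ⟫ = 0) (hf : ContDiffWithinAt ℝ 2 f (ball 0 ε)ᶜ (ε • ν))
    (hf_sphere : ∀ p ∈ sphere 0 ε, f p = c) {B : ℝ}
    (h_le : ∀ σ : V, ‖σ‖ = 1 → ⟪ν, σ⟫ = 0 → ∀ᶠ θ in 𝓝[>] 0,
      normalDeriv f ε (circlePoint ν σ θ) ≤ (1 + B * θ) * normalDeriv f ε ν) :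
    ε * |iteratedFDerivWithin ℝ 2 f (ball 0 ε)ᶜ (ε • ν) ![τ, ν]| ≤ B * normalDeriv f ε ν := by
  have h_bound {σ : V} (hσ : ‖σ‖ = 1) (hνσ : ⟪ν, σ⟫ = 0) :=
    mul_iteratedFDerivWithin_two_le_mul_normalDeriv hε hν hσ hνσ hf hf_sphere (h_le σ hσ hνσ)
  have h_neg := h_bound (σ := -τ) (by rw [norm_neg, hτ]) (by rw [inner_neg_right, hντ, neg_zero])
  have h_odd : iteratedFDerivWithin ℝ 2 f (ball 0 ε)ᶜ (ε • ν) ![-τ, ν]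
      = -iteratedFDerivWithin ℝ 2 f (ball 0 ε)ᶜ (ε • ν) ![τ, ν] := by
    simp only [iteratedFDerivWithin_two_apply f (uniqueDiffOn_compl_ball 0 hε)
      (smul_mem_compl_ball hν hε.le le_rfl), Matrix.cons_val_zero, Matrix.cons_val_one, map_neg,
      neg_apply]
  rw [h_odd] at h_neg
  rw [← abs_of_pos hε, ← abs_mul, abs_of_pos hε]
  exact abs_le'.2 ⟨h_bound hτ hντ, by rwa [mul_neg] at h_neg⟩

end ExteriorDerivatives

section MixedSecondDerivatives

variable {n k : ℕ} {Ω : Set (Euc n)} {ε ε₀ M δ : ℝ} {u ψ : Euc n → ℝ}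

theorem eventually_smul_mem_diff_closedBall (hΩ : IsOpen Ω) (hε : 0 ≤ ε)
    (hball : closedBall 0 ε ⊆ Ω) {ν : Euc n} (hν : ‖ν‖ = 1) :
    ∀ᶠ t in 𝓝[>] ε, t • ν ∈ Ω \ closedBall 0 ε := by
  have h_cont : ContinuousAt (fun t : ℝ => t • ν) ε := by fun_prop
  have h_mem : ε • ν ∈ Ω := hball (sphere_subset_closedBall (smul_mem_sphere hε hν))
  filter_upwards [nhdsWithin_le_nhds (h_cont.preimage_mem_nhds (hΩ.mem_nhds h_mem)),
    self_mem_nhdsWithin] with t htΩ ht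
  refine ⟨htΩ, ?_⟩
  rw [mem_closedBall_zero_iff, norm_smul, hν, mul_one, Real.norm_of_nonneg (hε.trans (le_of_lt ht))]
  exact not_le.2 ht

theorem IsSol.contDiffWithinAt_compl_ball (hΩ : IsOpen Ω) (hε : 0 < ε)
    (hball : closedBall 0 ε ⊆ Ω) (hu : IsSol k Ω 0 ε M u) {p : Euc n} (hp : p ∈ sphere 0 ε) :
    ContDiffWithinAt ℝ 2 u (ball 0 ε)ᶜ p := by
  have h_eq := ringSet_eventuallyEq_compl_ball (x₀ := 0) hΩ hε.ne'
    (hball (sphere_subset_closedBall hp))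
  have hp_ring : p ∈ ringSet Ω 0 ε := (h_eq.mem_iff.self_of_nhds).2 fun h => (mem_ball.1 h).ne hp
  exact (hu.1 p hp_ring).congr_set h_eq

theorem IsSol.normalDeriv_linearIsometryEquiv_apply_le (hk : 1 ≤ k) (hkn : k ≤ n)
    (hΩ : IsOpen Ω) (hΩb : IsBounded Ω) (hε : 0 < ε) (hball : closedBall 0 ε ⊆ Ω) (hM : 0 ≤ M)
    {s : ℝ} (hs : 0 ≤ s) (hδ : 0 ≤ δ) (hu : IsSol k Ω 0 ε M u)
    (h_gap : ∀ x ∈ frontier Ω, underSol k 0 ε M x ≤ -δ) {R : Euc n ≃ₗᵢ[ℝ] Euc n}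
    (hR : ∀ x ∈ ringSet Ω 0 ε, R x ∈ frontier Ω → -(s * δ) ≤ (1 + s) * u x) {ν : Euc n}
    (hν : ‖ν‖ = 1) : normalDeriv u ε (R ν) ≤ (1 + s) * normalDeriv u ε ν := by
  have hRν : ‖R ν‖ = 1 := by rw [R.norm_map, hν]
  refine normalDeriv_le_mul_normalDeriv hε.le hν hRν (fun p hp =>
    (hu.contDiffWithinAt_compl_ball hΩ hε hball hp).differentiableWithinAt two_ne_zero) hu.2.2.2 ?_
  filter_upwards [eventually_smul_mem_diff_closedBall hΩ hε.le hball hν,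
    eventually_smul_mem_diff_closedBall hΩ hε.le hball hRν] with t ht hRt
  rw [sub_neg_eq_add, sub_neg_eq_add, ← map_smul]
  rw [← map_smul] at hRt
  exact hu.comp_add_le_mul_add hk hkn hΩ hΩb hε.le hM hs hδ h_gap hR ⟨ht, hRt⟩

theorem IsLowerBarrier.exists_normalDeriv_circlePoint_le (hk : 1 ≤ k) (hkn : k ≤ n)
    (hΩ : IsOpen Ω) (hΩb : IsBounded Ω) (hψ : IsLowerBarrier k Ω ψ)
    (hball : closedBall 0 ε₀ ⊆ Ω) (hM : 0 ≤ M) (hδ : 0 < δ)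
    (h_gap : ∀ ε ∈ Ioo 0 ε₀, ∀ x ∈ frontier Ω, underSol k 0 ε M x ≤ -δ) :
    ∃ B : ℝ, 0 < B ∧ ∀ ε ∈ Ioo 0 ε₀, ∀ u, IsSol k Ω 0 ε M u → ∀ ν τ : Euc n, ‖ν‖ = 1 →
      ‖τ‖ = 1 → ⟪ν, τ⟫ = 0 → ∀ θ, 0 ≤ θ → B * θ ≤ 1 →
        normalDeriv u ε (circlePoint ν τ θ) ≤ (1 + B * θ) * normalDeriv u ε ν := by
  obtain ⟨K, hK, hu_ge⟩ := hψ.exists_neg_mul_norm_sub_le_of_isSol hk hkn hΩ hΩb hball M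
  obtain ⟨r, hr_pos, hr⟩ := hΩb.closure.exists_pos_norm_le
  refine ⟨4 * K * r / δ, by positivity, fun ε hε u hu ν τ hν hτ hντ θ hθ hBθ => ?_⟩
  obtain ⟨R, hRν, hR_le⟩ := exists_linearIsometryEquiv_apply_eq_circlePoint hν hτ hντ θ
  rw [← hRν]
  have hs : 0 ≤ 4 * K * r / δ * θ := by positivity
  refine hu.normalDeriv_linearIsometryEquiv_apply_le hk hkn hΩ hΩb hε.1
    ((closedBall_subset_closedBall hε.2.le).trans hball) hM hs hδ.le (h_gap ε hε) ?_ hν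
  intro x hx hRx
  have hRx_notMem : R x ∉ Ω := hΩ.frontier_eq ▸ hRx |>.2
  have h_dist : ‖x - R x‖ ≤ 2 * θ * r := by
    rw [norm_sub_rev, ← abs_of_nonneg hθ]
    exact (hR_le x).trans (by gcongr; exact hr x (ringSet_subset_closure hx))
  calc -(4 * K * r / δ * θ * δ) = (1 + 1) * -(K * (2 * θ * r)) := by field_simp; ring
    _ ≤ (1 + 4 * K * r / δ * θ) * -(K * (2 * θ * r)) :=
      mul_le_mul_of_nonpos_right (by gcongr) (neg_nonpos.2 (by positivity))
    _ ≤ (1 + 4 * K * r / δ * θ) * -(K * ‖x - R x‖) := by gcongr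
    _ ≤ (1 + 4 * K * r / δ * θ) * u x := by
      gcongr
      exact hu_ge ε hε.2.le u hu x hx (R x) hRx_notMem

theorem IsLowerBarrier.exists_mul_abs_iteratedFDerivWithin_two_le_mul_normalDeriv (hk : 1 ≤ k)
    (hkn : k ≤ n) (hΩ : IsOpen Ω) (hΩb : IsBounded Ω) (hψ : IsLowerBarrier k Ω ψ)
    (hball : closedBall 0 ε₀ ⊆ Ω) (hM : 0 ≤ M) (hδ : 0 < δ)
    (h_gap : ∀ ε ∈ Ioo 0 ε₀, ∀ x ∈ frontier Ω, underSol k 0 ε M x ≤ -δ) :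
    ∃ B : ℝ, 0 < B ∧ ∀ ε ∈ Ioo 0 ε₀, ∀ u, IsSol k Ω 0 ε M u → ∀ ν τ : Euc n, ‖ν‖ = 1 →
      ‖τ‖ = 1 → ⟪ν, τ⟫ = 0 →
        ε * |iteratedFDerivWithin ℝ 2 u (ball 0 ε)ᶜ (ε • ν) ![τ, ν]| ≤ B * normalDeriv u ε ν := by
  obtain ⟨B, hB, h_normal⟩ :=
    hψ.exists_normalDeriv_circlePoint_le hk hkn hΩ hΩb hball hM hδ h_gap
  refine ⟨B, hB, fun ε hε u hu ν τ hν hτ hντ => ?_⟩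
  have hball_ε : closedBall 0 ε ⊆ Ω := (closedBall_subset_closedBall hε.2.le).trans hball
  refine mul_abs_iteratedFDerivWithin_two_le_mul_normalDeriv hε.1 hν hτ hντ
    (hu.contDiffWithinAt_compl_ball hΩ hε.1 hball_ε (smul_mem_sphere hε.1.le hν)) hu.2.2.2
    fun σ hσ hνσ => ?_
  filter_upwards [Ioc_mem_nhdsGT (inv_pos.2 hB)] with θ ⟨hθ_pos, hθ_le⟩
  refine h_normal ε hε u hu ν σ hν hσ hνσ θ hθ_pos.le ?_
  rwa [← le_inv_mul_iff₀ hB, mul_one]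

end MixedSecondDerivatives

theorem statement9_general {n k : ℕ} (hk : 1 ≤ k) (hkn : k ≤ n) (Ω₁ : Set (Euc n))
    (hΩo : IsOpen Ω₁) (hΩb : IsBounded Ω₁) (ε₀ : ℝ) (hball : closedBall (0 : Euc n) ε₀ ⊆ Ω₁)
    (ψ : Euc n → ℝ) (hψ : IsLowerBarrier k Ω₁ ψ) (M₁ : ℝ)
    (hM₁sub : ∀ ε ∈ Ioo (0 : ℝ) ε₀, ∀ x ∈ frontier Ω₁, underSol k (0 : Euc n) ε M₁ x ≤ 0)
    (M : ℝ) (hM₀ : 0 ≤ M) (hM : M₁ < M) :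
    ∃ C : ℝ, 0 < C ∧ ∀ ε ∈ Ioo (0 : ℝ) ε₀, ∀ u : Euc n → ℝ,
      IsSol k Ω₁ (0 : Euc n) ε M u → ∀ p ∈ sphere (0 : Euc n) ε, ∀ τ : Euc n,
        ‖τ‖ = 1 → ⟪τ, p⟫ = 0 →
        |iteratedFDerivWithin ℝ 2 u (ringSet Ω₁ (0 : Euc n) ε) p ![τ, ε⁻¹ • p]| ≤
          C / ε * fderivWithin ℝ u (ringSet Ω₁ (0 : Euc n) ε) p (ε⁻¹ • p) := by
  have h_gap : ∀ ε ∈ Ioo 0 ε₀, ∀ x ∈ frontier Ω₁, underSol k 0 ε M x ≤ -(M - M₁) := by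
    intro ε hε x hx
    have h_sub := hM₁sub ε hε x hx
    rw [underSol] at h_sub ⊢
    linarith
  obtain ⟨B, hB, h_mixed⟩ := hψ.exists_mul_abs_iteratedFDerivWithin_two_le_mul_normalDeriv
    hk hkn hΩo hΩb hball hM₀ (sub_pos.2 hM) h_gap
  refine ⟨B, hB, fun ε hε u hu p hp τ hτ hτp => ?_⟩
  have h_set := ringSet_eventuallyEq_compl_ball (x₀ := 0) hΩo hε.1.ne'
    (hball (closedBall_subset_closedBall hε.2.le (sphere_subset_closedBall hp)))
  have hν : ‖ε⁻¹ • p‖ = 1 := by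
    rw [norm_smul, mem_sphere_zero_iff_norm.1 hp, norm_inv, Real.norm_of_nonneg hε.1.le,
      inv_mul_cancel₀ hε.1.ne']
  have hντ : ⟪ε⁻¹ • p, τ⟫ = 0 := by rw [real_inner_smul_left, real_inner_comm, hτp, mul_zero]
  have h_le := h_mixed ε hε u hu _ τ hν hτ hντ
  rw [normalDeriv, smul_inv_smul₀ hε.1.ne'] at h_le
  rw [iteratedFDerivWithin_congr_set h_set, fderivWithin_congr_set h_set, div_mul_eq_mul_div,
    le_div_iff₀' hε.1]
  exact h_le

/-- `C²` bound on `∂B_ε(0)` in the mixed tangential-normal directions. -/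
theorem statement9 {n k : ℕ} (hk : 1 ≤ k) (hkn : k ≤ n)
    (Ω₁ : Set (Euc n)) (hΩo : IsOpen Ω₁) (hΩconv : Convex ℝ Ω₁)
    (hΩb : IsBounded Ω₁) (hΩs : HasSmoothBoundary Ω₁)
    (ε₀ : ℝ) (hε₀ : 0 < ε₀) (hball : closedBall (0 : Euc n) ε₀ ⊆ Ω₁)
    (ψ : Euc n → ℝ) (hψ : IsSol22 k Ω₁ ψ)
    (M₁ : ℝ) (hM₁ : 0 < M₁) (hM₁ψ : ∀ x ∈ closure Ω₁, -ψ x < M₁)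
    (hM₁sub : ∀ ε ∈ Ioo (0:ℝ) ε₀, ∀ x ∈ frontier Ω₁, underSol k (0 : Euc n) ε M₁ x ≤ 0)
    (M : ℝ) (hM : M₁ < M)
 :
    ∃ C : ℝ, 0 < C ∧ ∀ ε ∈ Ioo (0:ℝ) ε₀, ∀ u : Euc n → ℝ,
      IsSol k Ω₁ (0 : Euc n) ε M u → ∀ p ∈ sphere (0 : Euc n) ε, ∀ τ : Euc n,
        ‖τ‖ = 1 → ⟪τ, p⟫ = 0 →
        |iteratedFDerivWithin ℝ 2 u (ringSet Ω₁ (0 : Euc n) ε) p ![τ, ε⁻¹ • p]| ≤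
          C / ε * fderivWithin ℝ u (ringSet Ω₁ (0 : Euc n) ε) p (ε⁻¹ • p) :=
  statement9_general hk hkn Ω₁ hΩo hΩb ε₀ hball ψ (hψ.isLowerBarrier hΩo) M₁ hM₁sub M
    (hM₁.trans hM).le hM
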